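/- arXiv:2201.00847 — 2 statements merged into one kernel-verified Lean document; each statement's English description precedes it below -/
import Mathlib

section
/- Let R be a Noetherian local ring and M a reduced G_C-perfect R-module of G_C-dimension n such that G_C-dim_R(M^C) < ∞. Then depth_R(M) + depth_R(Tr_C(M)) = depth(R) + depth_R(Ext_R^n(M,C)) − 1. -/
open CategoryTheory TensorProduct

noncomputable section

universe u

variable (R : Type u) [CommRing R]

/-- The `i`-th Ext module `Ext_R^i(M, N)`. -/
def ExtM (M N : ModuleCat.{u} R) (i : ℕ) : ModuleCat.{u} R :=
  ((Ext R (ModuleCat.{u} R) i).obj (Opposite.op M)).obj N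

/-- The `i`-th Tor module `Tor_i^R(M, N)`. -/
def TorM (M N : ModuleCat.{u} R) (i : ℕ) : ModuleCat.{u} R :=
  ((Tor (ModuleCat.{u} R) i).obj M).obj N

/-- The biduality (evaluation) map `M → Hom_R(Hom_R(M, C), C)`. -/
def bidualityMap (C M : ModuleCat.{u} R) :
    ↥M →ₗ[R] ((↥M →ₗ[R] ↥C) →ₗ[R] ↥C) :=
  (LinearMap.id : (↥M →ₗ[R] ↥C) →ₗ[R] (↥M →ₗ[R] ↥C)).flip

/-- `C` is a semidualizing `R`-module. -/
def IsSemidualizing (C : ModuleCat.{u} R) : Prop :=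
  Module.Finite R ↥C ∧
  Function.Bijective (fun r : R => (r • LinearMap.id : ↥C →ₗ[R] ↥C)) ∧
  ∀ i : ℕ, 0 < i → Subsingleton (ExtM R C C i)

/-- `M` is totally `C`-reflexive. -/
def IsTotallyCReflexive (C M : ModuleCat.{u} R) : Prop :=
  Module.Finite R ↥M ∧
  Function.Bijective (bidualityMap R C M) ∧
  (∀ i : ℕ, 0 < i → Subsingleton (ExtM R M C i)) ∧
  (∀ i : ℕ, 0 < i → Subsingleton (ExtM R (ModuleCat.of R (↥M →ₗ[R] ↥C)) C i))

/-- `G_C`-dimension of `M` is at most `n`: there is an exact sequence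
`0 → X_n → ⋯ → X_0 → M → 0` with each `X_i` totally `C`-reflexive. -/
def gcdimLE (C : ModuleCat.{u} R) : ℕ → ModuleCat.{u} R → Prop
  | 0, M => IsTotallyCReflexive R C M
  | n+1, M => ∃ (X K : ModuleCat.{u} R) (f : ↥K →ₗ[R] ↥X) (g : ↥X →ₗ[R] ↥M),
      Function.Injective f ∧ Function.Surjective g ∧
      LinearMap.ker g = LinearMap.range f ∧
      IsTotallyCReflexive R C X ∧ gcdimLE C n K

/-- The `G_C`-dimension of `M`, as an element of `ℕ∞`. -/
def gcdim (C M : ModuleCat.{u} R) : ℕ∞ :=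
  sInf ((fun n : ℕ => (n : ℕ∞)) '' {n | gcdimLE R C n M})

/-- `grade_R(M) = inf { i | Ext_R^i(M, R) ≠ 0 }`, with `grade 0 = ∞`. -/
def gradeR (M : ModuleCat.{u} R) : ℕ∞ :=
  sInf ((fun i : ℕ => (i : ℕ∞)) ''
    {i | ¬ Subsingleton (ExtM R M (ModuleCat.of R R) i)})

/-- Reduced grade of `M` with respect to `C`. -/
def rgrade (C M : ModuleCat.{u} R) : ℕ∞ :=
  sInf ((fun i : ℕ => (i : ℕ∞)) ''
    {i | 0 < i ∧ ¬ Subsingleton (ExtM R M C i)})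

/-- `M` is reduced `G_C`-perfect. -/
def IsReducedGCPerfect (C M : ModuleCat.{u} R) : Prop :=
  gcdim R C M ≠ ⊤ ∧ rgrade R C M = gcdim R C M

/-- `M` is `G_C`-perfect. -/
def IsGCPerfect (C M : ModuleCat.{u} R) : Prop :=
  gcdim R C M ≠ ⊤ ∧ gradeR R M = gcdim R C M

/-- `π : P → M` is a projective cover: `P` projective, `π` surjective with superfluous kernel. -/
def IsProjectiveCover {P M : ModuleCat.{u} R} (π : ↥P →ₗ[R] ↥M) : Prop :=
  Module.Projective R ↥P ∧ Function.Surjective π ∧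
  ∀ N : Submodule R ↥P, N ⊔ LinearMap.ker π = ⊤ → N = ⊤

/-- `P₁ →d P₀ →π M → 0` is a minimal projective presentation of `M`. -/
def IsMinimalPresentation {P1 P0 M : ModuleCat.{u} R}
    (d : ↥P1 →ₗ[R] ↥P0) (π : ↥P0 →ₗ[R] ↥M) : Prop :=
  Module.Finite R ↥P1 ∧ Module.Finite R ↥P0 ∧
  IsProjectiveCover R π ∧
  LinearMap.range d = LinearMap.ker π ∧
  Module.Projective R ↥P1 ∧
  ∀ N : Submodule R ↥P1, N ⊔ LinearMap.ker d = ⊤ → N = ⊤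

/-- `T` is (a module isomorphic to) the transpose `Tr_C(M)` of `M` with respect to `C`,
computed from a minimal projective presentation of `M`. -/
def IsTransposeC (C M T : ModuleCat.{u} R) : Prop :=
  ∃ (P1 P0 : ModuleCat.{u} R) (d : ↥P1 →ₗ[R] ↥P0) (π : ↥P0 →ₗ[R] ↥M),
    IsMinimalPresentation R d π ∧
    Nonempty (↥T ≃ₗ[R]
      ((↥P1 →ₗ[R] ↥C) ⧸ LinearMap.range (LinearMap.lcomp R ↥C d)))

/-- `T` is the usual Auslander transpose `Tr(M) = Tr_R(M)`. -/
def IsTranspose (M T : ModuleCat.{u} R) : Prop :=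
  IsTransposeC R (ModuleCat.of R R) M T

/-- `S` is (a module isomorphic to) the first syzygy `Ω N`, i.e. the kernel of a
projective cover of `N`. -/
def IsSyzygyOf (N S : ModuleCat.{u} R) : Prop :=
  ∃ (P : ModuleCat.{u} R) (π : ↥P →ₗ[R] ↥N),
    Module.Finite R ↥P ∧ IsProjectiveCover R π ∧
    Nonempty (↥S ≃ₗ[R] LinearMap.ker π)

/-- `S` is (a module isomorphic to) the `n`-th syzygy `Ωⁿ M`. -/
def IsNthSyzygy : ℕ → ModuleCat.{u} R → ModuleCat.{u} R → Prop
  | 0, M, S => Nonempty (↥S ≃ₗ[R] ↥M)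
  | n+1, M, S => ∃ K : ModuleCat.{u} R, IsNthSyzygy n M K ∧ IsSyzygyOf R K S

/-- `L` is (a module isomorphic to) `λ M = Ω Tr M`. -/
def IsLambda (M L : ModuleCat.{u} R) : Prop :=
  ∃ T : ModuleCat.{u} R, IsTranspose R M T ∧ IsSyzygyOf R T L

/-- `M` is horizontally linked, i.e. `M ≅ λλM`. -/
def IsHorizontallyLinked (M : ModuleCat.{u} R) : Prop :=
  ∃ L L2 : ModuleCat.{u} R, IsLambda R M L ∧ IsLambda R L L2 ∧
    Nonempty (↥M ≃ₗ[R] ↥L2)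

/-- `M` is stable: it has no non-zero projective direct summand. -/
def IsStable (M : ModuleCat.{u} R) : Prop :=
  ∀ (P N : ModuleCat.{u} R), Module.Projective R ↥P →
    Nonempty (↥M ≃ₗ[R] (↥P × ↥N)) → Subsingleton ↥P

/-- `N` belongs to the Auslander class `A_C`. -/
def MemAuslanderClass (C N : ModuleCat.{u} R) : Prop :=
  Function.Bijective (TensorProduct.mk R ↥N ↥C) ∧
  (∀ i : ℕ, 0 < i → Subsingleton (TorM R C N i)) ∧
  (∀ i : ℕ, 0 < i → Subsingleton
    (ExtM R C (ModuleCat.of R (↥N ⊗[R] ↥C)) i))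

/-- `R` is semiperfect: every finite `R`-module has a projective cover. -/
def IsSemiperfectRing : Prop :=
  ∀ M : ModuleCat.{u} R, Module.Finite R ↥M →
    ∃ (P : ModuleCat.{u} R) (π : ↥P →ₗ[R] ↥M),
      Module.Finite R ↥P ∧ IsProjectiveCover R π

/-- Depth over a local ring, via Ext from the residue field. -/
def rdepth [IsLocalRing R] (M : ModuleCat.{u} R) : ℕ∞ :=
  sInf ((fun i : ℕ => (i : ℕ∞)) ''
    {i | ¬ Subsingleton
      (ExtM R (ModuleCat.of R (IsLocalRing.ResidueField R)) M i)})

/-- Projective dimension at most `n`. -/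
def pdimLE : ℕ → ModuleCat.{u} R → Prop
  | 0, M => Module.Projective R ↥M
  | n+1, M => ∃ (X K : ModuleCat.{u} R) (f : ↥K →ₗ[R] ↥X) (g : ↥X →ₗ[R] ↥M),
      Function.Injective f ∧ Function.Surjective g ∧
      LinearMap.ker g = LinearMap.range f ∧
      Module.Projective R ↥X ∧ pdimLE n K

/-- Projective dimension, as an element of `ℕ∞`. -/
def pdim (M : ModuleCat.{u} R) : ℕ∞ :=
  sInf ((fun n : ℕ => (n : ℕ∞)) '' {n | pdimLE R n M})

/-- `M` is `C`-`k`-torsionless. -/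
def IsCkTorsionless (C M : ModuleCat.{u} R) (k : ℕ) : Prop :=
  k = 0 ∨ ∀ T : ModuleCat.{u} R, IsTransposeC R C M T →
    ∀ i : ℕ, 1 ≤ i → i ≤ k → Subsingleton (ExtM R T C i)

/-- `M` is a `C`-syzygy: it embeds into `P ⊗_R C` with `P` finite projective. -/
def IsCSyzygy (C M : ModuleCat.{u} R) : Prop :=
  ∃ (P : ModuleCat.{u} R), Module.Finite R ↥P ∧ Module.Projective R ↥P ∧
    ∃ f : ↥M →ₗ[R] (↥P ⊗[R] ↥C), Function.Injective f


/-- There is an exact sequence `0 → N → X_k → ⋯ → X_1 → M → 0` of finite `R`-modules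
with `Ext_R^i(X_j, C) = 0` for all `i > 0` and all `j`. -/
def ExtVanishingChain (C : ModuleCat.{u} R) : ℕ → ModuleCat.{u} R → ModuleCat.{u} R → Prop
  | 0, N, M => Nonempty (↥N ≃ₗ[R] ↥M)
  | k+1, N, M => ∃ (X K : ModuleCat.{u} R) (f : ↥K →ₗ[R] ↥X) (g : ↥X →ₗ[R] ↥M),
      Function.Injective f ∧ Function.Surjective g ∧
      LinearMap.ker g = LinearMap.range f ∧
      Module.Finite R ↥X ∧ (∀ i : ℕ, 0 < i → Subsingleton (ExtM R X C i)) ∧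
      ExtVanishingChain C k N K


section bridge
variable {R}
open Abelian

/-- cocycles in degree `n` -/
def cocyc {X : ModuleCat.{u} R} (P : ProjectiveResolution X) (Y : ModuleCat.{u} R) (n : ℕ) :
    Submodule R (P.complex.X n ⟶ Y) where
  carrier := {f | P.complex.d (n+1) n ≫ f = 0}
  add_mem' {a b} ha hb := by
    simp only [Set.mem_ofPred_eq] at *
    rw [Preadditive.comp_add, ha, hb, add_zero]
  zero_mem' := by simp
  smul_mem' r a ha := by
    simp only [Set.mem_ofPred_eq] at *
    rw [Linear.comp_smul, ha, smul_zero]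

/-- extMk as a linear map on cocycles -/
def cocycleToExt {X : ModuleCat.{u} R} (P : ProjectiveResolution X) (Y : ModuleCat.{u} R) (n : ℕ) :
    cocyc P Y n →ₗ[R] Abelian.Ext.{u} X Y n where
  toFun z := P.extMk z.1 (n+1) rfl z.2
  map_add' x y := (P.add_extMk x.1 y.1 (n+1) rfl x.2 y.2).symm
  map_smul' r x := by
    simp only [RingHom.id_apply]
    rw [Abelian.Ext.smul_eq_comp_mk₀]
    refine Eq.trans ?_ (P.extMk_comp_mk₀ x.1 (n+1) rfl x.2 (r • 𝟙 Y)).symm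
    have h : (r • x : cocyc P Y n).1 = x.1 ≫ (r • 𝟙 Y) := by simp
    congr 1

lemma cocycleToExt_surj {X : ModuleCat.{u} R} (P : ProjectiveResolution X) (Y : ModuleCat.{u} R) (n : ℕ) :
    Function.Surjective (cocycleToExt P Y n) := by
  intro α
  obtain ⟨f, hf, h⟩ := P.extMk_surjective α (n+1) rfl
  exact ⟨⟨f, hf⟩, h⟩

/-- The homology of a three-term piece as a concrete quotient. -/
lemma homology_quot (S : ShortComplex (ModuleCat.{u} R)) :
    Nonempty (S.homology ≃ₗ[R] (LinearMap.ker S.g.hom ⧸ LinearMap.range S.moduleCatToCycles)) :=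
  ⟨S.moduleCatHomologyIso.toLinearEquiv⟩

/-- cocycles agree -/
def cocycEquiv {X : ModuleCat.{u} R} (P : ProjectiveResolution X) (Y : ModuleCat.{u} R) (n : ℕ) :
    LinearMap.ker ((P.complex.linearYonedaObj R Y).d n (n+1)).hom ≃ₗ[R] cocyc P Y n where
  toFun z := ⟨z.1, z.2⟩
  invFun z := ⟨z.1, z.2⟩
  map_add' _ _ := rfl
  map_smul' _ _ := rfl
  left_inv _ := rfl
  right_inv _ := rfl

lemma extEquiv_succ (X Y : ModuleCat.{u} R) (n : ℕ) :
    Nonempty (ExtM R X Y (n+1) ≃ₗ[R] Abelian.Ext.{u} X Y (n+1)) := by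
  let P := projectiveResolution X
  let K := P.complex.linearYonedaObj R Y
  let e1 : ExtM R X Y (n+1) ≅ K.homology (n+1) := P.isoExt (n+1) Y
  let e2 := K.homologyIsoSc' n (n+1) (n+1+1) (by simp) (by simp)
  obtain ⟨e3⟩ := homology_quot (K.sc' n (n+1) (n+1+1))
  let ψ : LinearMap.ker (K.sc' n (n+1) (n+1+1)).g.hom →ₗ[R] Abelian.Ext.{u} X Y (n+1) :=
    (cocycleToExt P Y (n+1)).comp (cocycEquiv P Y (n+1)).toLinearMap
  have hψ : Function.Surjective ψ :=
    (cocycleToExt_surj P Y (n+1)).comp (cocycEquiv P Y (n+1)).surjective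
  have hker : LinearMap.ker ψ = LinearMap.range (K.sc' n (n+1) (n+1+1)).moduleCatToCycles := by
    ext z
    rw [LinearMap.mem_ker]
    refine (P.extMk_eq_zero_iff (cocycEquiv P Y (n+1) z).1 (n+1+1) rfl (cocycEquiv P Y (n+1) z).2 n rfl).trans ?_
    constructor
    · rintro ⟨g, hg⟩
      exact ⟨g, Subtype.ext hg⟩
    · rintro ⟨g, hg⟩
      exact ⟨g, congrArg Subtype.val hg⟩
  exact ⟨(e1 ≪≫ e2).toLinearEquiv.trans (e3.trans ((Submodule.quotEquivOfEq _ _ hker.symm).trans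
    (ψ.quotKerEquivOfSurjective hψ)))⟩

lemma extEquiv_zero (X Y : ModuleCat.{u} R) :
    Nonempty (ExtM R X Y 0 ≃ₗ[R] Abelian.Ext.{u} X Y 0) := by
  let P := projectiveResolution X
  let K := P.complex.linearYonedaObj R Y
  let e1 : ExtM R X Y 0 ≅ K.homology 0 := P.isoExt 0 Y
  let e2 := K.homologyIsoSc' 0 0 (0+1) (by simp) (by simp)
  obtain ⟨e3⟩ := homology_quot (K.sc' 0 0 (0+1))
  have hz : LinearMap.range (K.sc' 0 0 (0+1)).moduleCatToCycles = ⊥ := by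
    rw [LinearMap.range_eq_bot]
    ext g
    have : K.d 0 0 = 0 := K.shape _ _ (by simp)
    show (K.d 0 0).hom g = 0
    rw [this]; rfl
  have h0 : P.complex.d 1 0 ≫ P.π.f 0 = 0 := P.complex_d_comp_π_f_zero
  let φ : (X ⟶ Y) →ₗ[R] cocyc P Y 0 :=
    { toFun := fun g => ⟨P.π.f 0 ≫ g, by
        show P.complex.d 1 0 ≫ P.π.f 0 ≫ g = 0
        exact (Category.assoc _ _ _).symm.trans ((congrArg (· ≫ g) h0).trans Limits.zero_comp)⟩
      map_add' := fun a b => Subtype.ext (Preadditive.comp_add _ _ _ _ _ _)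
      map_smul' := fun r a => Subtype.ext (Linear.comp_smul _ _ _ _ _ _) }
  have hφ : Function.Bijective φ := by
    constructor
    · intro a b hab
      have : P.π.f 0 ≫ a = P.π.f 0 ≫ b := congrArg Subtype.val hab
      exact (cancel_epi (P.π.f 0)).1 this
    · intro z
      refine ⟨P.isColimitCokernelCofork.desc (Limits.CokernelCofork.ofπ z.1 z.2), Subtype.ext ?_⟩
      exact P.isColimitCokernelCofork.fac _ Limits.WalkingParallelPair.one
  exact ⟨(e1 ≪≫ e2).toLinearEquiv.trans (e3.trans ((Submodule.quotEquivOfEqBot _ hz).trans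
    ((cocycEquiv P Y 0).trans ((LinearEquiv.ofBijective φ hφ).symm.trans
      Abelian.Ext.linearEquiv₀.symm))))⟩

lemma extEquiv (X Y : ModuleCat.{u} R) (n : ℕ) :
    Nonempty (ExtM R X Y n ≃ₗ[R] Abelian.Ext.{u} X Y n) := by
  cases n with
  | zero => exact extEquiv_zero X Y
  | succ n => exact extEquiv_succ X Y n

end bridge

section toolkit
variable {R}

/-- vanishing of Ext -/
def EV (X Y : ModuleCat.{u} R) (i : ℕ) : Prop := Subsingleton (Abelian.Ext.{u} X Y i)

lemma EV_iff (X Y : ModuleCat.{u} R) (i : ℕ) : Subsingleton (ExtM R X Y i) ↔ EV X Y i := by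
  obtain ⟨e⟩ := extEquiv X Y i
  exact e.toEquiv.subsingleton_congr

lemma EV.eq_zero {X Y : ModuleCat.{u} R} {i : ℕ} (h : EV X Y i) (x : Abelian.Ext.{u} X Y i) : x = 0 :=
  h.elim x 0

lemma EV_of {X Y : ModuleCat.{u} R} {i : ℕ} (h : ∀ x : Abelian.Ext.{u} X Y i, x = 0) : EV X Y i :=
  ⟨fun a b => (h a).trans (h b).symm⟩

lemma exists_ne_of_not_EV {X Y : ModuleCat.{u} R} {i : ℕ} (h : ¬ EV X Y i) :
    ∃ x : Abelian.Ext.{u} X Y i, x ≠ 0 := by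
  by_contra! hc
  exact h (EV_of hc)

/-- postcomposition -/
def pcomp {X A B : ModuleCat.{u} R} {i : ℕ} (x : Abelian.Ext.{u} X A i) (h : A →ₗ[R] B) :
    Abelian.Ext.{u} X B i := x.comp (Abelian.Ext.mk₀ (ModuleCat.ofHom h)) (add_zero i)

section
variable {X A B D : ModuleCat.{u} R} {i : ℕ}

lemma pcomp_comp (x : Abelian.Ext.{u} X A i) (h : A →ₗ[R] B) (k : B →ₗ[R] D) :
    pcomp (pcomp x h) k = pcomp x (k ∘ₗ h) := by
  unfold pcomp
  rw [Abelian.Ext.comp_assoc_of_second_deg_zero, Abelian.Ext.mk₀_comp_mk₀]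
  rfl

lemma pcomp_id (x : Abelian.Ext.{u} X A i) : pcomp x LinearMap.id = x :=
  Abelian.Ext.comp_mk₀_id x

lemma pcomp_add (x y : Abelian.Ext.{u} X A i) (h : A →ₗ[R] B) :
    pcomp (x + y) h = pcomp x h + pcomp y h := by
  simp [pcomp]

lemma pcomp_smul (r : R) (x : Abelian.Ext.{u} X A i) (h : A →ₗ[R] B) :
    pcomp (r • x) h = r • pcomp x h := by
  simp [pcomp]

lemma zero_pcomp (h : A →ₗ[R] B) : pcomp (0 : Abelian.Ext.{u} X A i) h = 0 := by
  simp [pcomp]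

lemma pcomp_zero (x : Abelian.Ext.{u} X A i) : pcomp x (0 : A →ₗ[R] B) = 0 := by
  have : ModuleCat.ofHom (0 : A →ₗ[R] B) = 0 := rfl
  simp [pcomp, this]

lemma pcomp_smul_hom (r : R) (x : Abelian.Ext.{u} X A i) (h : A →ₗ[R] B) :
    pcomp x (r • h) = r • pcomp x h := by
  have : ModuleCat.ofHom (r • h) = r • ModuleCat.ofHom h := rfl
  simp [pcomp, this, Abelian.Ext.mk₀_smul]

lemma pcomp_add_hom (x : Abelian.Ext.{u} X A i) (h h' : A →ₗ[R] B) :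
    pcomp x (h + h') = pcomp x h + pcomp x h' := by
  have : ModuleCat.ofHom (h + h') = ModuleCat.ofHom h + ModuleCat.ofHom h' := rfl
  unfold pcomp
  rw [this, Abelian.Ext.mk₀_add, Abelian.Ext.comp_add]

/-- postcomposition, as a linear map in the morphism -/
def pcompHom (x : Abelian.Ext.{u} X A i) (B : ModuleCat.{u} R) :
    (A →ₗ[R] B) →ₗ[R] Abelian.Ext.{u} X B i where
  toFun h := pcomp x h
  map_add' := pcomp_add_hom x
  map_smul' r h := pcomp_smul_hom r x h

/-- postcomposition, as a linear map in the class -/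
def pcompLin (X : ModuleCat.{u} R) (i : ℕ) (h : A →ₗ[R] B) :
    Abelian.Ext.{u} X A i →ₗ[R] Abelian.Ext.{u} X B i where
  toFun x := pcomp x h
  map_add' x y := pcomp_add x y h
  map_smul' r x := pcomp_smul r x h

lemma EV.of_equiv_right (h : EV X A i) (e : A ≃ₗ[R] B) : EV X B i := by
  refine EV_of fun x => ?_
  have h1 : pcomp (pcomp x e.symm.toLinearMap) e.toLinearMap = x := by
    rw [pcomp_comp, LinearEquiv.comp_symm]; exact pcomp_id _
  rw [← h1, h.eq_zero (pcomp x e.symm.toLinearMap), zero_pcomp]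

lemma EV.of_equiv_left {A B Y : ModuleCat.{u} R} {i : ℕ} (h : EV A Y i) (e : A ≃ₗ[R] B) : EV B Y i := by
  refine EV_of fun x => ?_
  have h1 : (Abelian.Ext.mk₀ (ModuleCat.ofHom e.symm.toLinearMap)).comp
      ((Abelian.Ext.mk₀ (ModuleCat.ofHom e.toLinearMap)).comp x (zero_add i)) (zero_add i) = x := by
    rw [Abelian.Ext.mk₀_comp_mk₀_assoc, ← ModuleCat.ofHom_comp]
    simp
  rw [← h1, h.eq_zero (Abelian.Ext.comp _ x _), Abelian.Ext.comp_zero]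

lemma EV_zero_iff (X Y : ModuleCat.{u} R) : EV X Y 0 ↔ Subsingleton (X →ₗ[R] Y) := by
  have e : Abelian.Ext.{u} X Y 0 ≃ (X →ₗ[R] Y) := 
    (Abelian.Ext.linearEquiv₀ (R := R)).toEquiv.trans ModuleCat.homEquiv
  exact e.subsingleton_congr

end

/-- short exact sequences -/
structure SES {A B D : ModuleCat.{u} R} (f : A →ₗ[R] B) (g : B →ₗ[R] D) : Prop where
  inj : Function.Injective f
  exact : Function.Exact f g
  surj : Function.Surjective g

namespace SES
variable {A B D X Y : ModuleCat.{u} R} {f : A →ₗ[R] B} {g : B →ₗ[R] D}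

lemma comp_eq (h : SES f g) : g ∘ₗ f = 0 := h.exact.linearMap_comp_eq_zero

lemma apply (h : SES f g) (a : A) : g (f a) = 0 := h.exact.apply_apply_eq_zero a

lemma comp_eq' (h : SES f g) : ModuleCat.ofHom f ≫ ModuleCat.ofHom g = 0 := by
  rw [← ModuleCat.ofHom_comp, h.comp_eq]; rfl

lemma se (h : SES f g) : (ShortComplex.mk (ModuleCat.ofHom f) (ModuleCat.ofHom g) h.comp_eq').ShortExact :=
  ModuleCat.shortComplex_shortExact _ h.exact h.inj h.surj

lemma of_ker (g : B →ₗ[R] D) (hg : Function.Surjective g) :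
    SES (A := ModuleCat.of R (LinearMap.ker g)) (LinearMap.ker g).subtype g :=
  ⟨Subtype.val_injective, LinearMap.exact_subtype_ker_map g, hg⟩

lemma of_range (f : A →ₗ[R] B) (hf : Function.Injective f) :
    SES (D := ModuleCat.of R (B ⧸ LinearMap.range f)) f (LinearMap.range f).mkQ :=
  ⟨hf, LinearMap.exact_map_mkQ_range f, Submodule.mkQ_surjective _⟩

/-- A short exact sequence from any pair of maps with the usual conditions. -/
lemma mk' (hf : Function.Injective f) (hg : Function.Surjective g)
    (h : LinearMap.ker g = LinearMap.range f) : SES f g :=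
  ⟨hf, LinearMap.exact_iff.2 h, hg⟩

lemma cov_inj (h : SES f g) {i : ℕ} (hD : EV X D i) (x : Abelian.Ext.{u} X A (i+1))
    (hx : pcomp x f = 0) : x = 0 := by
  obtain ⟨y, hy⟩ := Abelian.Ext.covariant_sequence_exact₁ X h.se x hx rfl
  rw [← hy, hD.eq_zero y, Abelian.Ext.zero_comp]

lemma cov_inj_zero (h : SES f g) (x : Abelian.Ext.{u} X A 0)
    (hx : pcomp x f = 0) : x = 0 := by
  have : Mono (ModuleCat.ofHom f) := (ModuleCat.mono_iff_injective _).2 h.inj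
  apply Abelian.Ext.postcomp_mk₀_injective_of_mono X (ModuleCat.ofHom f)
  rw [map_zero]; exact hx

lemma cov_ex2 (h : SES f g) {i : ℕ} (x : Abelian.Ext.{u} X B i)
    (hx : pcomp x g = 0) : ∃ y : Abelian.Ext.{u} X A i, pcomp y f = x :=
  Abelian.Ext.covariant_sequence_exact₂ X h.se x hx

lemma cov1 (h : SES f g) {i : ℕ} (hB : EV X B (i+1)) (hD : EV X D i) : EV X A (i+1) :=
  EV_of fun x => h.cov_inj hD x (hB.eq_zero _)

lemma cov1_zero (h : SES f g) (hB : EV X B 0) : EV X A 0 :=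
  EV_of fun x => h.cov_inj_zero x (hB.eq_zero _)

lemma cov2 (h : SES f g) {i : ℕ} (hA : EV X A i) (hD : EV X D i) : EV X B i := by
  refine EV_of fun x => ?_
  obtain ⟨y, hy⟩ := h.cov_ex2 x (hD.eq_zero _)
  rw [← hy, hA.eq_zero y, zero_pcomp]

lemma cov3 (h : SES f g) {i : ℕ} (hB : EV X B i) (hA : EV X A (i+1)) : EV X D i := by
  refine EV_of fun x => ?_
  obtain ⟨y, hy⟩ := Abelian.Ext.covariant_sequence_exact₃ X h.se x rfl (hA.eq_zero _)
  rw [← hy, hB.eq_zero y, Abelian.Ext.zero_comp]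

lemma con1 (h : SES f g) {i : ℕ} (hB : EV B Y i) (hD : EV D Y (i+1)) : EV A Y i := by
  refine EV_of fun x => ?_
  obtain ⟨y, hy⟩ := Abelian.Ext.contravariant_sequence_exact₁ h.se Y x (add_comm 1 i) (hD.eq_zero _)
  rw [← hy, hB.eq_zero y, Abelian.Ext.comp_zero]

lemma con2 (h : SES f g) {i : ℕ} (hA : EV A Y i) (hD : EV D Y i) : EV B Y i := by
  refine EV_of fun x => ?_
  obtain ⟨y, hy⟩ := Abelian.Ext.contravariant_sequence_exact₂ h.se Y x (hA.eq_zero _)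
  rw [← hy, hD.eq_zero y, Abelian.Ext.comp_zero]

lemma con3 (h : SES f g) {i : ℕ} (hA : EV A Y i) (hB : EV B Y (i+1)) : EV D Y (i+1) := by
  refine EV_of fun x => ?_
  obtain ⟨y, hy⟩ := Abelian.Ext.contravariant_sequence_exact₃ h.se Y x (hB.eq_zero _) (add_comm 1 i)
  rw [← hy, hA.eq_zero y, Abelian.Ext.comp_zero]

/-- The connecting map is linear -/
def conn (h : SES f g) (Y : ModuleCat.{u} R) (i : ℕ) :
    Abelian.Ext.{u} A Y i →ₗ[R] Abelian.Ext.{u} D Y (i+1) where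
  toFun x := h.se.extClass.comp x (add_comm 1 i)
  map_add' x y := by simp
  map_smul' r x := by simp

lemma conn_bij (h : SES f g) {i : ℕ} (hB : EV B Y i) (hB2 : EV B Y (i+1)) :
    Function.Bijective (h.conn Y i) := by
  constructor
  · rw [← LinearMap.ker_eq_bot, LinearMap.ker_eq_bot']
    intro x hx
    obtain ⟨y, hy⟩ := Abelian.Ext.contravariant_sequence_exact₁ h.se Y x (add_comm 1 i) hx
    rw [← hy, hB.eq_zero y, Abelian.Ext.comp_zero]
  · intro x
    exact Abelian.Ext.contravariant_sequence_exact₃ h.se Y x (hB2.eq_zero _) (add_comm 1 i)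

lemma shift (h : SES f g) {i : ℕ} (hB : EV B Y i) (hB2 : EV B Y (i+1)) :
    Nonempty (Abelian.Ext.{u} A Y i ≃ₗ[R] Abelian.Ext.{u} D Y (i+1)) :=
  ⟨LinearEquiv.ofBijective _ (h.conn_bij hB hB2)⟩

/-- hom to Ext^0 as linear equiv -/
def homZero (A Y : ModuleCat.{u} R) : (A →ₗ[R] Y) ≃ₗ[R] Abelian.Ext.{u} A Y 0 :=
  (ModuleCat.homLinearEquiv (S := R)).symm.trans (Abelian.Ext.linearEquiv₀ (R := R)).symm

lemma homZero_apply (A Y : ModuleCat.{u} R) (h : A →ₗ[R] Y) :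
    homZero A Y h = Abelian.Ext.mk₀ (ModuleCat.ofHom h) := rfl

lemma ker_conn (h : SES f g) (Y : ModuleCat.{u} R) :
    LinearMap.ker ((h.conn Y 0).comp (homZero A Y).toLinearMap) =
      LinearMap.range (LinearMap.lcomp R Y f) := by
  ext x
  constructor
  · intro hx
    obtain ⟨y, hy⟩ := Abelian.Ext.contravariant_sequence_exact₁ h.se Y (homZero A Y x) (add_comm 1 0) hx
    obtain ⟨z, rfl⟩ := (homZero B Y).surjective y
    refine ⟨z, (homZero A Y).injective ?_⟩
    rw [← hy, homZero_apply, homZero_apply]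
    exact (Abelian.Ext.mk₀_comp_mk₀ _ _).symm
  · rintro ⟨z, rfl⟩
    rw [LinearMap.mem_ker]
    show h.se.extClass.comp (Abelian.Ext.mk₀ (ModuleCat.ofHom f ≫ ModuleCat.ofHom z))
      (add_comm 1 0) = 0
    rw [← Abelian.Ext.mk₀_comp_mk₀]
    exact h.se.extClass_comp_assoc _

lemma ext1 (h : SES f g) (hD : EV D Y 1) (x : A →ₗ[R] Y) : ∃ y : B →ₗ[R] Y, y ∘ₗ f = x := by
  have : x ∈ LinearMap.ker ((h.conn Y 0).comp (homZero A Y).toLinearMap) :=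
    hD.eq_zero _
  rw [ker_conn] at this
  exact this

lemma conn_surj (h : SES f g) (hB : EV B Y 1) :
    Function.Surjective ((h.conn Y 0).comp (homZero A Y).toLinearMap) := by
  refine Function.Surjective.comp (g := h.conn Y 0) ?_ (homZero A Y).surjective
  intro x
  exact Abelian.Ext.contravariant_sequence_exact₃ h.se Y x (hB.eq_zero _) (add_comm 1 0)

lemma ext1_equiv (h : SES f g) (hB : EV B Y 1) :
    Nonempty (((A →ₗ[R] Y) ⧸ LinearMap.range (LinearMap.lcomp R Y f)) ≃ₗ[R] Abelian.Ext.{u} D Y 1) :=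
  ⟨(Submodule.quotEquivOfEq _ _ (h.ker_conn Y).symm).trans
    (LinearMap.quotKerEquivOfSurjective _ (h.conn_surj hB))⟩

lemma EV_one (h : SES f g) (hB : EV B Y 1) (hx : ∀ x : A →ₗ[R] Y, ∃ y : B →ₗ[R] Y, y ∘ₗ f = x) :
    EV D Y 1 := by
  refine EV_of fun z => ?_
  obtain ⟨x, rfl⟩ := h.conn_surj hB z
  have : x ∈ LinearMap.range (LinearMap.lcomp R Y f) := hx x
  rw [← h.ker_conn] at this
  exact this

/-- dual sequence -/
lemma dual (h : SES f g) (hD : EV D Y 1) :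
    SES (A := ModuleCat.of R (D →ₗ[R] Y)) (B := ModuleCat.of R (B →ₗ[R] Y))
      (D := ModuleCat.of R (A →ₗ[R] Y)) (LinearMap.lcomp R Y g) (LinearMap.lcomp R Y f) where
  inj := fun a b hab => by
    ext d
    obtain ⟨b', rfl⟩ := h.surj d
    exact LinearMap.congr_fun hab b'
  exact := LinearMap.exact_lcomp_of_exact_of_surjective Y h.exact h.surj
  surj := h.ext1 hD

end SES
end toolkit

section depthlemmas
variable {R}

/-- the `C`-dual -/
abbrev dl (Y C : ModuleCat.{u} R) : ModuleCat.{u} R := ModuleCat.of R (Y →ₗ[R] C)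

/-- evaluation at `y` -/
def evm {Y : ModuleCat.{u} R} (C : ModuleCat.{u} R) (y : Y) : dl Y C →ₗ[R] C := LinearMap.applyₗ y

/-- dual of a map -/
abbrev dmap {Z Y : ModuleCat.{u} R} (C : ModuleCat.{u} R) (φ : Z →ₗ[R] Y) : dl Y C →ₗ[R] dl Z C :=
  LinearMap.lcomp R C φ

lemma evm_dmap {Z Y C : ModuleCat.{u} R} (φ : Z →ₗ[R] Y) (z : Z) :
    (evm C z) ∘ₗ dmap C φ = evm C (φ z) := rfl

/-- Ext vanishing in positive degrees -/
def EVpos (Y C : ModuleCat.{u} R) : Prop := ∀ i, 0 < i → EV Y C i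

lemma EVpos_proj (P C : ModuleCat.{u} R) [Module.Projective R P] : EVpos P C := by
  intro i hi
  have : Projective P := (IsProjective.iff_projective P).1 inferInstance
  obtain ⟨j, rfl⟩ : ∃ j, i = j + 1 := ⟨i - 1, by omega⟩
  exact EV_of fun x => Abelian.Ext.eq_zero_of_projective x

/-- free module -/
abbrev fr (R : Type u) [CommRing R] (a : ℕ) : ModuleCat.{u} R := ModuleCat.of R (Fin a → R)

lemma cover [IsNoetherianRing R] (Y : ModuleCat.{u} R) [Module.Finite R Y] :
    ∃ (a : ℕ) (K : ModuleCat.{u} R) (f : K →ₗ[R] fr R a) (g : fr R a →ₗ[R] Y),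
      SES f g ∧ Module.Finite R K := by
  obtain ⟨a, g, hg⟩ := Module.Finite.exists_fin' R Y
  refine ⟨a, _, _, g, SES.of_ker (B := fr R a) g hg, ?_⟩
  show Module.Finite R (LinearMap.ker g)
  infer_instance

lemma SES.EVpos_left {A B D C : ModuleCat.{u} R} {f : A →ₗ[R] B} {g : B →ₗ[R] D}
    (h : SES f g) (hB : EVpos B C) (hD : EVpos D C) : EVpos A C :=
  fun i hi => h.con1 (hB i hi) (hD (i+1) (by omega))

/-- the insertion `C → Hom(R^a, C)` -/
def ins (C : ModuleCat.{u} R) {a : ℕ} (j : Fin a) : C →ₗ[R] dl (fr R a) C where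
  toFun c := (LinearMap.toSpanSingleton R C c).comp (LinearMap.proj j)
  map_add' x y := by ext; simp
  map_smul' r x := by
    refine LinearMap.ext fun v => ?_
    exact smul_comm (v j) r x

lemma evm_ins (C : ModuleCat.{u} R) {a : ℕ} (j : Fin a) (v : fr R a) :
    evm C v ∘ₗ ins C j = v j • LinearMap.id := by
  ext c; rfl

lemma id_eq_sum (C : ModuleCat.{u} R) (a : ℕ) :
    (LinearMap.id : dl (fr R a) C →ₗ[R] dl (fr R a) C) =
      ∑ j, ins C j ∘ₗ evm C (Y := fr R a) (Pi.single j (1 : R)) := by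
  refine LinearMap.ext fun h => ?_
  refine LinearMap.ext fun v => ?_
  rw [LinearMap.sum_apply]
  erw [LinearMap.sum_apply]
  show h v = ∑ j, v j • h (Pi.single j (1:R))
  have hv : v = ∑ j, v j • (Pi.single j (1 : R) : Fin a → R) := (pi_eq_sum_univ' v)
  conv_lhs => rw [hv]
  rw [map_sum]
  simp_rw [map_smul]

lemma F0 {X C : ModuleCat.{u} R} {a i : ℕ} (β : Abelian.Ext.{u} X (dl (fr R a) C) i)
    (h : ∀ v, pcomp β (evm C v) = 0) : β = 0 := by
  have h1 : pcompHom β (dl (fr R a) C) LinearMap.id = 0 := by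
    rw [id_eq_sum, map_sum]
    refine Finset.sum_eq_zero fun j _ => ?_
    show pcomp β (ins C j ∘ₗ evm C (Y := fr R a) (Pi.single j (1 : R))) = 0
    rw [← pcomp_comp, h, zero_pcomp]
  rw [← h1]
  exact (pcomp_id β).symm

lemma L1 [IsNoetherianRing R] {X C : ModuleCat.{u} R} (i : ℕ) : (∀ j, j ≤ i → EV X C j) →
    ∀ Y : ModuleCat.{u} R, Module.Finite R Y → EVpos Y C → EV X (dl Y C) i := by
  induction i with
  | zero =>
    intro h Y hY hv
    obtain ⟨a, K, f, g, hs, hK⟩ := cover Y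
    refine (hs.dual (hv 1 one_pos)).cov1_zero (EV_of fun x => F0 x fun v => (h 0 le_rfl).eq_zero _)
  | succ i ih =>
    intro h Y hY hv
    obtain ⟨a, K, f, g, hs, hK⟩ := cover Y
    refine (hs.dual (hv 1 one_pos)).cov1 (EV_of fun x => F0 x fun v => (h _ le_rfl).eq_zero _) ?_
    exact ih (fun j hj => h j (by omega)) K hK (hs.EVpos_left (EVpos_proj _ _) hv)

/-- depth at least `s` (relative to `X`) -/
def dge (X M : ModuleCat.{u} R) (s : ℕ) : Prop := ∀ i, i < s → EV X M i

lemma L1' [IsNoetherianRing R] {X C : ModuleCat.{u} R} {s : ℕ} (h : dge X C s)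
    (Y : ModuleCat.{u} R) [hY : Module.Finite R Y] (hv : EVpos Y C) : dge X (dl Y C) s :=
  fun i hi => L1 i (fun j hj => h j (by omega)) Y hY hv

lemma L3 [IsNoetherianRing R] {X C : ModuleCat.{u} R} {t : ℕ} (h : dge X C t)
    (Z : ModuleCat.{u} R) [Module.Finite R Z] (hv : EVpos Z C)
    (β : Abelian.Ext.{u} X (dl Z C) t) (hβ : ∀ z, pcomp β (evm C z) = 0) : β = 0 := by
  obtain ⟨a, K, f, g, hs, hK⟩ := cover Z
  have hd := hs.dual (hv 1 one_pos)
  have h0 : pcomp β (dmap C g) = 0 := by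
    refine F0 _ fun v => ?_
    rw [pcomp_comp, evm_dmap, hβ]
  cases t with
  | zero => exact hd.cov_inj_zero β h0
  | succ t => exact hd.cov_inj (L1' h K (hs.EVpos_left (EVpos_proj _ _) hv) t (by omega)) β h0

variable [IsLocalRing R]

/-- the residue field -/
abbrev kk (R : Type u) [CommRing R] [IsLocalRing R] : ModuleCat.{u} R :=
  ModuleCat.of R (IsLocalRing.ResidueField R)

lemma kk_smul {Y : ModuleCat.{u} R} {i : ℕ} (x : Abelian.Ext.{u} (kk R) Y i) {r : R}
    (hr : IsLocalRing.residue R r = 0) : r • x = 0 := by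
  have h1 : (r • LinearMap.id : kk R →ₗ[R] kk R) = 0 := by
    refine LinearMap.ext fun z => ?_
    show r • z = 0
    rw [Algebra.smul_def]
    erw [hr]
    exact zero_mul _
  have h2 : r • (𝟙 (kk R)) = 0 := by
    ext : 1
    exact h1
  calc r • x = r • (Abelian.Ext.mk₀ (𝟙 (kk R))).comp x (zero_add i) := by rw [Abelian.Ext.mk₀_id_comp]
    _ = (Abelian.Ext.mk₀ (r • 𝟙 (kk R))).comp x (zero_add i) := by
        rw [Abelian.Ext.mk₀_smul, Abelian.Ext.smul_comp]
    _ = 0 := by rw [h2, Abelian.Ext.mk₀_zero, Abelian.Ext.zero_comp]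

lemma kk_smul_congr {Y : ModuleCat.{u} R} {i : ℕ} (x : Abelian.Ext.{u} (kk R) Y i) {r s : R}
    (hr : IsLocalRing.residue R r = IsLocalRing.residue R s) : r • x = s • x := by
  rw [← sub_eq_zero, ← sub_smul]
  exact kk_smul x (by rw [map_sub, hr, sub_self])

lemma L2 [IsNoetherianRing R] {C : ModuleCat.{u} R} {t : ℕ} (h : dge (kk R) C t)
    (Y : ModuleCat.{u} R) [Module.Finite R Y] (hv : EVpos Y C)
    (lam : Y →ₗ[R] IsLocalRing.ResidueField R) (α : Abelian.Ext.{u} (kk R) C t) :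
    ∃ β : Abelian.Ext.{u} (kk R) (dl Y C) t, ∀ (y : Y) (r : R), IsLocalRing.residue R r = lam y →
      pcomp β (evm C y) = r • α := by
  obtain ⟨a, K, f, g, hs, hK⟩ := cover Y
  have hd := hs.dual (hv 1 one_pos)
  have hvK : EVpos K C := hs.EVpos_left (EVpos_proj _ _) hv
  choose r hr using fun j : Fin a => IsLocalRing.residue_surjective (R := R)
    (lam (g (Pi.single j (1 : R) : Fin a → R)))
  let α' : Abelian.Ext.{u} (kk R) (dl (fr R a) C) t := ∑ j, r j • pcomp α (ins C j)
  have key : ∀ v : fr R a, pcomp α' (evm C v) = (∑ j, r j * v j) • α := by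
    intro v
    show pcompLin (kk R) t (evm C v) α' = _
    rw [map_sum, Finset.sum_smul]
    refine Finset.sum_congr rfl fun j _ => ?_
    rw [map_smul]
    show r j • pcomp (pcomp α (ins C j)) (evm C v) = _
    rw [pcomp_comp, evm_ins, pcomp_smul_hom, pcomp_id, mul_smul]
  have hlam : ∀ v : fr R a, lam (g v) = IsLocalRing.residue R (∑ j, r j * v j) := by
    intro v
    have hv : v = ∑ j, v j • (Pi.single j (1 : R) : Fin a → R) := (pi_eq_sum_univ' v)
    conv_lhs => rw [hv]
    rw [map_sum, map_sum, map_sum]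
    refine Finset.sum_congr rfl fun j _ => ?_
    rw [map_smul, map_smul, map_mul, hr, Algebra.smul_def, mul_comm]
    rfl
  have h0 : pcomp α' (dmap C f) = 0 := by
    refine L3 h K hvK _ fun z => ?_
    rw [pcomp_comp, evm_dmap, key]
    refine kk_smul α ?_
    rw [← hlam, hs.apply, map_zero]
  obtain ⟨β, hβ⟩ := hd.cov_ex2 α' h0
  refine ⟨β, fun y s hsy => ?_⟩
  obtain ⟨v, rfl⟩ := hs.surj y
  have : pcomp β (evm C (g v)) = pcomp α' (evm C v) := by
    rw [← hβ, pcomp_comp]; rfl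
  rw [this, key]
  exact kk_smul_congr α (by rw [← hlam, hsy])

lemma exists_lam (Y : ModuleCat.{u} R) [Module.Finite R Y] (N : Submodule R Y) (hN : N ≠ ⊤) :
    ∃ (lam : Y →ₗ[R] IsLocalRing.ResidueField R) (y : Y), lam y = 1 ∧ ∀ z ∈ N, lam z = 0 := by
  obtain ⟨m, hm, hle⟩ := (eq_top_or_exists_le_coatom N).resolve_left hN
  have : IsSimpleModule R (Y ⧸ m) := isSimpleModule_iff_isCoatom.2 hm
  obtain ⟨I, hI, ⟨e⟩⟩ := isSimpleModule_iff_quot_maximal.mp this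
  obtain rfl := IsLocalRing.eq_maximalIdeal hI
  let l : Y →ₗ[R] IsLocalRing.ResidueField R := e.toLinearMap ∘ₗ m.mkQ
  have hl : Function.Surjective l := e.surjective.comp m.mkQ_surjective
  obtain ⟨y, hy⟩ := hl 1
  refine ⟨l, y, hy, fun z hz => ?_⟩
  show e (m.mkQ z) = 0
  rw [(Submodule.Quotient.mk_eq_zero m).2 (hle hz) |> fun h : m.mkQ z = 0 => h, map_zero]

lemma L2' [IsNoetherianRing R] {C : ModuleCat.{u} R} {t : ℕ} (h : dge (kk R) C t)
    (ht : ¬ EV (kk R) C t) (Z Y : ModuleCat.{u} R) [Module.Finite R Z] [Module.Finite R Y]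
    (hZ : EVpos Z C) (hY : EVpos Y C) (φ : Z →ₗ[R] Y) (hφ : ¬ Function.Surjective φ) :
    ∃ β : Abelian.Ext.{u} (kk R) (dl Y C) t, β ≠ 0 ∧ pcomp β (dmap C φ) = 0 := by
  obtain ⟨lam, y, hy, hlam⟩ := exists_lam Y (LinearMap.range φ) (fun h => hφ (LinearMap.range_eq_top.1 h))
  obtain ⟨α, hα⟩ := exists_ne_of_not_EV ht
  obtain ⟨β, hβ⟩ := L2 h Y hY lam α
  refine ⟨β, ?_, ?_⟩
  · rintro rfl
    have := hβ y 1 (by rw [hy, map_one])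
    rw [zero_pcomp, one_smul] at this
    exact hα this.symm
  · refine L3 h Z hZ _ fun z => ?_
    rw [pcomp_comp, evm_dmap, hβ (φ z) 0 (by rw [hlam _ ⟨z, rfl⟩, map_zero]), zero_smul]

/-- depth equal to `s` -/
def depthEq (M : ModuleCat.{u} R) (s : ℕ) : Prop := dge (kk R) M s ∧ ¬ EV (kk R) M s

lemma depthEq.of_equiv {A B : ModuleCat.{u} R} {s : ℕ} (h : depthEq A s) (e : A ≃ₗ[R] B) : depthEq B s :=
  ⟨fun i hi => (h.1 i hi).of_equiv_right e, fun hB => h.2 (hB.of_equiv_right e.symm)⟩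

lemma depthEq_dual [IsNoetherianRing R] {C : ModuleCat.{u} R} {t : ℕ} (h : depthEq C t)
    (Y : ModuleCat.{u} R) [Module.Finite R Y] (hY : EVpos Y C) (hn : Nontrivial Y) : depthEq (dl Y C) t := by
  refine ⟨L1' h.1 Y hY, fun hE => ?_⟩
  obtain ⟨β, hβ, -⟩ := L2' h.1 h.2 Y Y hY hY 0 (fun hs => by
    obtain ⟨y, hy⟩ := exists_ne (0 : Y)
    obtain ⟨z, hz⟩ := hs y
    exact hy (by rw [← hz]; rfl))
  exact hβ (hE.eq_zero _)

/-- the shift lemma -/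
lemma SES.depth_shift {A B D : ModuleCat.{u} R} {f : A →ₗ[R] B} {g : B →ₗ[R] D}
    (h : SES f g) {s t : ℕ} (hB : dge (kk R) B t) (hD : depthEq D s) (hst : s < t) :
    depthEq A (s+1) := by
  refine ⟨fun i hi => ?_, fun hA => hD.2 (h.cov3 (hB s hst) hA)⟩
  cases i with
  | zero => exact h.cov1_zero (hB 0 (by omega))
  | succ i => exact h.cov1 (hB _ (by omega)) (hD.1 i (by omega))

lemma rdepth_eq {M : ModuleCat.{u} R} {s : ℕ} (h : depthEq M s) : rdepth R M = s := by
  refine le_antisymm (sInf_le ⟨s, fun hs => h.2 ((EV_iff _ _ _).1 hs), rfl⟩) ?_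
  refine le_sInf ?_
  rintro _ ⟨i, hi, rfl⟩
  by_contra hc
  exact hi ((EV_iff _ _ _).2 (h.1 i (by simpa using hc)))

lemma rdepth_eq_top {M : ModuleCat.{u} R} (h : ∀ i, EV (kk R) M i) : rdepth R M = ⊤ := by
  refine le_antisymm le_top (le_sInf ?_)
  rintro _ ⟨i, hi, rfl⟩
  exact absurd ((EV_iff _ _ _).2 (h i)) hi

lemma depth_cases (M : ModuleCat.{u} R) : (∃ s, depthEq M s) ∨ ∀ i, EV (kk R) M i := by
  by_cases h : ∀ i, EV (kk R) M i
  · exact Or.inr h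
  · push Not at h
    classical
    refine Or.inl ⟨Nat.find h, fun i hi => ?_, Nat.find_spec h⟩
    simpa using Nat.find_min h hi

end depthlemmas

section gcdimlemmas
variable {R}

namespace IsTotallyCReflexive
variable {C X : ModuleCat.{u} R}

lemma fin (h : IsTotallyCReflexive R C X) : Module.Finite R X := h.1

lemma bij (h : IsTotallyCReflexive R C X) : Function.Bijective (bidualityMap R C X) := h.2.1

lemma evp (h : IsTotallyCReflexive R C X) : EVpos X C := fun i hi => (EV_iff _ _ _).1 (h.2.2.1 i hi)

lemma evpd (h : IsTotallyCReflexive R C X) : EVpos (dl X C) C :=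
  fun i hi => (EV_iff _ _ _).1 (h.2.2.2 i hi)

lemma mk' (h1 : Module.Finite R X) (h2 : Function.Bijective (bidualityMap R C X)) (h3 : EVpos X C)
    (h4 : EVpos (dl X C) C) : IsTotallyCReflexive R C X :=
  ⟨h1, h2, fun i hi => (EV_iff _ _ _).2 (h3 i hi), fun i hi => (EV_iff _ _ _).2 (h4 i hi)⟩

/-- the biduality isomorphism -/
def eqv (h : IsTotallyCReflexive R C X) : X ≃ₗ[R] dl (dl X C) C :=
  LinearEquiv.ofBijective (bidualityMap R C X) h.bij

lemma dual [IsNoetherianRing R] [Module.Finite R C] (h : IsTotallyCReflexive R C X) :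
    IsTotallyCReflexive R C (dl X C) := by
  have := h.fin
  refine mk' ?_ ?_ h.evpd ?_
  · show Module.Finite R (X →ₗ[R] C)
    infer_instance
  · have h1 : Function.Bijective (dmap (Z := X) (Y := dl (dl X C) C) C (bidualityMap R C X)) := by
      constructor
      · intro a b hab
        refine LinearMap.ext fun z => ?_
        obtain ⟨x, rfl⟩ := h.bij.2 z
        exact LinearMap.congr_fun hab x
      · intro a
        refine ⟨a ∘ₗ h.eqv.symm.toLinearMap, LinearMap.ext fun x => ?_⟩
        show a (h.eqv.symm (h.eqv x)) = a x
        rw [LinearEquiv.symm_apply_apply]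
    have h2 : ∀ a, dmap (Z := X) (Y := dl (dl X C) C) C (bidualityMap R C X)
        (bidualityMap R C (dl X C) a) = a := fun a => rfl
    constructor
    · intro a b hab
      rw [← h2 a, hab, h2]
    · intro a
      exact ⟨_, h1.1 (h2 _)⟩
  · exact fun i hi => (h.evp i hi).of_equiv_left h.eqv

lemma depth_ge [IsNoetherianRing R] [Module.Finite R C] (h : IsTotallyCReflexive R C X)
    {k : ModuleCat.{u} R} {t : ℕ} (hC : dge k C t) : dge k X t := by
  have := h.dual.fin
  exact fun i hi => ((L1' hC (dl X C) h.evpd) i hi).of_equiv_right h.eqv.symm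

end IsTotallyCReflexive

lemma bid_nat {C X Y : ModuleCat.{u} R} (f : X →ₗ[R] Y) (x : X) :
    dmap C (dmap C f) (bidualityMap R C X x) = bidualityMap R C Y (f x) := rfl

variable {C : ModuleCat.{u} R}

lemma gcd_finite [IsNoetherianRing R] {n : ℕ} {M : ModuleCat.{u} R} (h : gcdimLE R C n M) :
    Module.Finite R M := by
  cases n with
  | zero => exact h.1
  | succ n =>
    obtain ⟨X, K, f, g, hf, hg, he, hX, hK⟩ := h
    have := hX.fin
    exact Module.Finite.of_surjective g hg

lemma gcd_EV {n : ℕ} : ∀ {M : ModuleCat.{u} R}, gcdimLE R C n M → ∀ i, n < i → EV M C i := by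
  induction n with
  | zero => exact fun h i hi => IsTotallyCReflexive.evp h i hi
  | succ n ih =>
    intro M h i hi
    obtain ⟨X, K, f, g, hf, hg, he, hX, hK⟩ := h
    obtain ⟨j, rfl⟩ : ∃ j, i = j + 1 := ⟨i - 1, by omega⟩
    exact (SES.mk' hf hg he).con3 (ih hK j (by omega)) (hX.evp _ (by omega))

variable [IsNoetherianRing R] [Module.Finite R C]

lemma gcd_depth_top {k : ModuleCat.{u} R} (hC : ∀ i, EV k C i) {n : ℕ} :
    ∀ {M : ModuleCat.{u} R}, gcdimLE R C n M → ∀ i, EV k M i := by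
  induction n with
  | zero => exact fun h i =>
      IsTotallyCReflexive.depth_ge (t := i+1) h (fun j _ => hC j) i (by omega)
  | succ n ih =>
    intro M h i
    obtain ⟨X, K, f, g, hf, hg, he, hX, hK⟩ := h
    exact (SES.mk' hf hg he).cov3 (hX.depth_ge (t := i+1) (fun j _ => hC j) i (by omega)) (ih hK _)

/-- Auslander–Bridger formula, one form -/
lemma AB [IsLocalRing R] {t : ℕ} (ht : depthEq C t) (n : ℕ) :
    ∀ M : ModuleCat.{u} R, gcdimLE R C n M → ¬ EV M C n → ∃ s, s + n = t ∧ depthEq M s := by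
  induction n with
  | zero =>
    intro M h hM
    have h' : IsTotallyCReflexive R C M := h
    rw [EV_zero_iff, not_subsingleton_iff_nontrivial] at hM
    have := h'.dual.fin
    exact ⟨t, rfl, (depthEq_dual ht (dl M C) h'.evpd hM).of_equiv h'.eqv.symm⟩
  | succ n ih =>
    intro M h hM
    obtain ⟨X, K, f, g, hf, hg, he, hX, hK⟩ := h
    have hs := SES.mk' hf hg he
    cases n with
    | zero =>
      have hK : IsTotallyCReflexive R C K := hK
      have := hX.dual.fin
      have := hK.dual.fin
      have hns : ¬ Function.Surjective (dmap C f) := fun hsurj =>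
        hM (hs.EV_one (hX.evp 1 one_pos) hsurj)
      obtain ⟨β, hβ, hβ0⟩ := L2' ht.1 ht.2 (dl X C) (dl K C) hX.evpd hK.evpd _ hns
      let β' := pcomp β hK.eqv.symm.toLinearMap
      have hβ1 : β' ≠ 0 := by
        intro h0
        apply hβ
        have h1 : pcomp β' hK.eqv.toLinearMap = β := by
          rw [pcomp_comp, LinearEquiv.comp_symm]; exact pcomp_id _
        rw [← h1, h0, zero_pcomp]
      have hβ2 : pcomp β' f = 0 := by
        have h1 : f ∘ₗ hK.eqv.symm.toLinearMap = hX.eqv.symm.toLinearMap ∘ₗ dmap C (dmap C f) := by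
          refine LinearMap.ext fun z => ?_
          obtain ⟨x, rfl⟩ := hK.eqv.surjective z
          show f (hK.eqv.symm (hK.eqv x)) = hX.eqv.symm (hX.eqv (f x))
          rw [LinearEquiv.symm_apply_apply, LinearEquiv.symm_apply_apply]
        rw [pcomp_comp, h1, ← pcomp_comp, hβ0, zero_pcomp]
      have hXt := hX.depth_ge ht.1
      have hKt := hK.depth_ge ht.1
      cases t with
      | zero => exact absurd (hs.cov_inj_zero β' hβ2) hβ1
      | succ t =>
        refine ⟨t, rfl, fun i hi => hs.cov3 (hXt i (by omega)) (hKt (i+1) (by omega)), fun hE => ?_⟩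
        exact hβ1 (hs.cov_inj hE β' hβ2)
    | succ m =>
      obtain ⟨s, hst, hs1⟩ := ih K hK fun hE => hM (hs.con3 hE (hX.evp _ (by omega)))
      have hXt := hX.depth_ge ht.1
      cases s with
      | zero => exact absurd (hs.cov1_zero (hXt 0 (by omega))) hs1.2
      | succ s =>
        refine ⟨s, by omega, fun i hi => hs.cov3 (hXt i (by omega)) (hs1.1 (i+1) (by omega)), fun hE => ?_⟩
        exact hs1.2 (hs.cov1 (hXt (s+1) (by omega)) hE)

lemma GR (g : ℕ) : ∀ E : ModuleCat.{u} R, gcdimLE R C (g+1) E → EV E C (g+1) → gcdimLE R C g E := by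
  induction g with
  | zero =>
    intro E h hE
    have hfin := gcd_finite h
    have hev : EVpos E C := by
      intro i hi
      rcases Nat.lt_or_ge 1 i with h1 | h1
      · exact gcd_EV h i h1
      · obtain rfl : i = 1 := by omega
        exact hE
    obtain ⟨X, K, f, g, hf, hg, he, hX, hK⟩ := h
    have hK : IsTotallyCReflexive R C K := hK
    have hs := SES.mk' hf hg he
    have hd := hs.dual hE
    have hdd := hd.dual (hK.evpd 1 one_pos)
    refine IsTotallyCReflexive.mk' hfin ⟨?_, ?_⟩ hev (hd.EVpos_left hX.evpd hK.evpd)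
    · rw [← LinearMap.ker_eq_bot, LinearMap.ker_eq_bot']
      intro e he
      obtain ⟨x, rfl⟩ := hs.surj e
      rw [← bid_nat] at he
      obtain ⟨w, hw⟩ := (hdd.exact _).1 he
      obtain ⟨k, rfl⟩ := hK.bij.2 w
      have : x = f k := hX.bij.1 hw.symm
      rw [this, hs.apply]
    · intro z
      obtain ⟨w, rfl⟩ := hdd.surj z
      obtain ⟨x, rfl⟩ := hX.bij.2 w
      exact ⟨g x, rfl⟩
  | succ g ih =>
    intro E h hE
    obtain ⟨X, K, f, g, hf, hg, he, hX, hK⟩ := h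
    have hs := SES.mk' hf hg he
    exact ⟨X, K, f, g, hf, hg, he, hX, ih K hK (hs.con1 (hX.evp _ (by omega)) hE)⟩

lemma depth_E [IsLocalRing R] {t : ℕ} (ht : depthEq C t) (n g : ℕ) :
    ∀ E : ModuleCat.{u} R, Nontrivial E → gcdimLE R C g E → (∀ i, i < n → EV E C i) →
      ∃ s, depthEq E s ∧ s + n ≤ t := by
  induction g with
  | zero =>
    intro E hn hE hv
    by_cases h0 : EV E C 0
    · exfalso
      have h' : IsTotallyCReflexive R C E := hE
      rw [EV_zero_iff] at h0
      obtain ⟨y, hy⟩ := exists_ne (0 : E)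
      refine hy (h'.bij.1 ?_)
      refine LinearMap.ext fun a => ?_
      rw [Subsingleton.elim a 0]
      simp
    · obtain ⟨s, hs, hs'⟩ := AB ht 0 E hE h0
      refine ⟨s, hs', ?_⟩
      have : n = 0 := by
        by_contra hc
        exact h0 (hv 0 (by omega))
      omega
  | succ g ih =>
    intro E hn hE hv
    by_cases h0 : EV E C (g+1)
    · exact ih E hn (GR g E hE h0) hv
    · obtain ⟨s, hs, hs'⟩ := AB ht _ E hE h0
      refine ⟨s, hs', ?_⟩
      have : n ≤ g + 1 := by
        by_contra hc
        exact h0 (hv _ (by omega))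
      omega

end gcdimlemmas

section chain
variable {R}
variable {C : ModuleCat.{u} R}

/-- the torsionlessness condition used for the induction -/
def UU (C : ModuleCat.{u} R) (k : ℕ) (M : ModuleCat.{u} R) : Prop :=
  (1 ≤ k → Function.Injective (bidualityMap R C M)) ∧
  (2 ≤ k → Function.Surjective (bidualityMap R C M)) ∧
  ∀ j, 0 < j → j + 2 ≤ k → EV (dl M C) C j

lemma UU_zero (M : ModuleCat.{u} R) : UU C 0 M :=
  ⟨fun h => absurd h (by omega), fun h => absurd h (by omega), fun j _ h => absurd h (by omega)⟩

lemma UU_step {K X M : ModuleCat.{u} R} {f : K →ₗ[R] X} {g : X →ₗ[R] M} (hs : SES f g)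
    (hM : EV M C 1) (hX : IsTotallyCReflexive R C X) {k : ℕ} (hU : UU C k M) : UU C (k+1) K := by
  have hd := hs.dual hM
  refine ⟨fun _ => ?_, fun hk => ?_, fun j hj hk => ?_⟩
  · intro a b hab
    apply hs.inj
    apply hX.bij.1
    rw [← bid_nat, ← bid_nat, hab]
  · intro z
    obtain ⟨x, hx⟩ := hX.bij.2 (dmap C (dmap C f) z)
    have h1 : bidualityMap R C M (g x) = 0 := by
      rw [← bid_nat, hx]
      refine LinearMap.ext fun m => ?_
      show z (m ∘ₗ g ∘ₗ f) = 0
      rw [hs.comp_eq, LinearMap.comp_zero, map_zero]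
    have h2 : g x = 0 := hU.1 (by omega) (h1.trans (map_zero _).symm)
    obtain ⟨a, rfl⟩ := (hs.exact x).1 h2
    refine ⟨a, LinearMap.ext fun w => ?_⟩
    obtain ⟨y, rfl⟩ := hd.surj w
    exact LinearMap.congr_fun hx y
  · rcases Nat.lt_or_ge 1 j with h1 | h1
    · obtain ⟨i, rfl⟩ : ∃ i, j = i + 2 := ⟨j - 2, by omega⟩
      exact hd.con3 (hU.2.2 (i+1) (by omega) (by omega)) (hX.evpd _ (by omega))
    · obtain rfl : j = 1 := by omega
      refine hd.EV_one (hX.evpd 1 one_pos) fun w => ?_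
      obtain ⟨m, rfl⟩ := hU.2.1 (by omega) w
      obtain ⟨x, rfl⟩ := hs.surj m
      exact ⟨bidualityMap R C X x, rfl⟩

lemma chain_base [IsNoetherianRing R] [Module.Finite R C]
    {K X M : ModuleCat.{u} R} {f : K →ₗ[R] X} {g : X →ₗ[R] M} (hs : SES f g)
    (hX : IsTotallyCReflexive R C X) (hK : IsTotallyCReflexive R C K) {k a : ℕ} (hU : UU C k M)
    (hMd : gcdimLE R C a (dl M C)) :
    ∃ E : ModuleCat.{u} R, Nonempty (E ≃ₗ[R] Abelian.Ext.{u} M C 1) ∧ gcdimLE R C (a+2) E ∧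
      ∀ i, i < 1 + k → EV E C i := by
  let I : ModuleCat.{u} R := ModuleCat.of R (LinearMap.range (dmap C f))
  let E : ModuleCat.{u} R := ModuleCat.of R (dl K C ⧸ LinearMap.range (dmap C f))
  have h1 : SES (A := I) (B := dl K C) (D := E) (LinearMap.range (dmap C f)).subtype
      (LinearMap.range (dmap C f)).mkQ :=
    SES.mk' Subtype.val_injective (Submodule.mkQ_surjective _)
      (by rw [Submodule.ker_mkQ, Submodule.range_subtype])
  have h2 : SES (A := dl M C) (B := dl X C) (D := I) (dmap C g) (dmap C f).rangeRestrict := by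
    refine SES.mk' ?_ ((dmap C f).surjective_rangeRestrict) ?_
    · exact LinearMap.lcomp_injective_of_surjective _ hs.surj
    · rw [LinearMap.ker_rangeRestrict]
      exact LinearMap.exact_iff.1 (LinearMap.exact_lcomp_of_exact_of_surjective C hs.exact hs.surj)
  refine ⟨E, hs.ext1_equiv (hX.evp 1 one_pos), ?_, fun i hi => ?_⟩
  · exact ⟨dl K C, I, _, _, h1.inj, h1.surj, LinearMap.exact_iff.1 h1.exact, hK.dual,
      dl X C, dl M C, _, _, h2.inj, h2.surj, LinearMap.exact_iff.1 h2.exact, hX.dual, hMd⟩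
  match i, hi with
  | 0, _ =>
    rw [EV_zero_iff]
    refine ⟨fun w w' => ?_⟩
    have key : ∀ w : E →ₗ[R] C, w = 0 := by
      intro w
      obtain ⟨b, hb⟩ := hK.bij.2 (w ∘ₗ (LinearMap.range (dmap C f)).mkQ)
      have hfb : f b = 0 := by
        apply hX.bij.1
        rw [map_zero]
        refine LinearMap.ext fun y => ?_
        have := LinearMap.congr_fun hb (dmap C f y)
        refine Eq.trans this ?_
        show w ((LinearMap.range (dmap C f)).mkQ (dmap C f y)) = 0
        have h0 : (LinearMap.range (dmap C f)).mkQ (dmap C f y) = 0 :=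
          (Submodule.Quotient.mk_eq_zero _).2 ⟨y, rfl⟩
        rw [h0, map_zero]
      have hb0 : b = 0 := hs.inj (hfb.trans (map_zero f).symm)
      refine LinearMap.ext fun e => ?_
      obtain ⟨y, rfl⟩ := h1.surj e
      have := LinearMap.congr_fun hb y
      refine Eq.trans this.symm ?_
      rw [hb0, map_zero]
      rfl
    rw [key w, key w']
  | 1, hi =>
    refine h1.EV_one (hK.evpd 1 one_pos) fun w => ?_
    obtain ⟨x, hx⟩ := hX.bij.2 (w ∘ₗ (dmap C f).rangeRestrict)
    have hgx : g x = 0 := by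
      apply hU.1 (by omega)
      rw [map_zero]
      refine LinearMap.ext fun m => ?_
      have := LinearMap.congr_fun hx (dmap C g m)
      refine Eq.trans this ?_
      show w ((dmap C f).rangeRestrict (dmap C g m)) = 0
      rw [h2.apply, map_zero]
    obtain ⟨b, rfl⟩ := (hs.exact x).1 hgx
    refine ⟨bidualityMap R C K b, LinearMap.ext fun y => ?_⟩
    obtain ⟨y, rfl⟩ := h2.surj y
    exact LinearMap.congr_fun hx y
  | i+2, hi =>
    refine h1.con3 ?_ (hK.evpd _ (by omega))
    cases i with
    | zero =>
      refine h2.EV_one (hX.evpd 1 one_pos) fun w => ?_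
      obtain ⟨m, rfl⟩ := hU.2.1 (by omega) w
      obtain ⟨x, rfl⟩ := hs.surj m
      exact ⟨bidualityMap R C X x, rfl⟩
    | succ i =>
      exact h2.con3 (hU.2.2 (i+1) (by omega) (by omega)) (hX.evpd _ (by omega))

lemma chain_claim [IsNoetherianRing R] [Module.Finite R C] (n : ℕ) :
    ∀ (M : ModuleCat.{u} R) (a k : ℕ), gcdimLE R C (n+1) M → (∀ i, 0 < i → i < n + 1 → EV M C i) →
      gcdimLE R C a (dl M C) → UU C k M →
      ∃ E : ModuleCat.{u} R, Nonempty (E ≃ₗ[R] Abelian.Ext.{u} M C (n+1)) ∧ gcdimLE R C (a+n+2) E ∧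
        ∀ i, i < n + 1 + k → EV E C i := by
  induction n with
  | zero =>
    intro M a k hM hv hd hU
    obtain ⟨X, K, f, g, hf, hg, he, hX, hK⟩ := hM
    obtain ⟨E, h1, h2, h3⟩ := chain_base (SES.mk' hf hg he) hX hK hU hd
    exact ⟨E, h1, h2, fun i hi => h3 i (by omega)⟩
  | succ n ih =>
    intro M a k hM hv hd hU
    obtain ⟨X, K, f, g, hf, hg, he, hX, hK⟩ := hM
    have hs := SES.mk' hf hg he
    have hM1 := hv 1 one_pos (by omega)
    have hsd := hs.dual hM1
    obtain ⟨E, ⟨e⟩, h2, h3⟩ := ih K (a+1) (k+1) hK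
      (fun i hi hi' => hs.con1 (hX.evp i hi) (hv (i+1) (by omega) (by omega)))
      ⟨dl X C, dl M C, _, _, hsd.inj, hsd.surj, LinearMap.exact_iff.1 hsd.exact, hX.dual, hd⟩
      (UU_step hs hM1 hX hU)
    obtain ⟨e'⟩ := hs.shift (hX.evp (n+1) (by omega)) (hX.evp (n+1+1) (by omega))
    refine ⟨E, ⟨e.trans e'⟩, ?_, fun i hi => h3 i (by omega)⟩
    have : a + (n+1) + 2 = a + 1 + n + 2 := by omega
    rw [this]
    exact h2

end chain

section transpose
variable {R}
variable {C : ModuleCat.{u} R}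

lemma EV_of_subsingleton {X Y : ModuleCat.{u} R} (h : Subsingleton Y) (i : ℕ) : EV X Y i := by
  refine EV_of fun x => ?_
  rw [← pcomp_id x]
  have : (LinearMap.id : Y →ₗ[R] Y) = 0 := LinearMap.ext fun y => Subsingleton.elim _ _
  rw [this, pcomp_zero]

lemma SES.dual_range {A B D : ModuleCat.{u} R} {f : A →ₗ[R] B} {g : B →ₗ[R] D} (hs : SES f g)
    (C : ModuleCat.{u} R) :
    SES (A := dl D C) (B := dl B C) (D := ModuleCat.of R (LinearMap.range (dmap C f)))
      (dmap C g) (dmap C f).rangeRestrict := by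
  refine SES.mk' ?_ ((dmap C f).surjective_rangeRestrict) ?_
  · exact LinearMap.lcomp_injective_of_surjective _ hs.surj
  · rw [LinearMap.ker_rangeRestrict]
    exact LinearMap.exact_iff.1 (LinearMap.exact_lcomp_of_exact_of_surjective C hs.exact hs.surj)

/-- the range of the restriction is everything if `Ext^1` vanishes -/
lemma SES.range_equiv {A B D : ModuleCat.{u} R} {f : A →ₗ[R] B} {g : B →ₗ[R] D} (hs : SES f g)
    (hD : EV D C 1) : Nonempty (dl A C ≃ₗ[R] LinearMap.range (dmap C f)) := by
  have : LinearMap.range (dmap C f) = ⊤ := LinearMap.range_eq_top.2 (hs.dual hD).surj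
  exact ⟨(LinearEquiv.ofTop _ this).symm⟩

lemma depth_L [IsNoetherianRing R] [IsLocalRing R] {s t : ℕ} (ht : dge (kk R) C t) (m : ℕ) :
    ∀ {N' P N : ModuleCat.{u} R} {ι : N' →ₗ[R] P} {q : P →ₗ[R] N}, SES ι q → EVpos P C →
      Module.Finite R N' → (∀ i, 0 < i → i ≠ m + 1 → EV N C i) →
      ∀ E : ModuleCat.{u} R, Nonempty (E ≃ₗ[R] Abelian.Ext.{u} N C (m+1)) → depthEq E s →
      s + (m + 1) ≤ t → depthEq (ModuleCat.of R (LinearMap.range (dmap C ι))) (s + m + 1) := by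
  induction m with
  | zero =>
    intro N' P N ι q hs hP hN' hv E he hE hst
    obtain ⟨e⟩ := he
    obtain ⟨e'⟩ := hs.ext1_equiv (hP 1 one_pos)
    have h1 : SES (A := ModuleCat.of R (LinearMap.range (dmap C ι))) (B := dl N' C)
        (D := ModuleCat.of R (dl N' C ⧸ LinearMap.range (dmap C ι)))
        (LinearMap.range (dmap C ι)).subtype (LinearMap.range (dmap C ι)).mkQ :=
      SES.mk' Subtype.val_injective (Submodule.mkQ_surjective _)
        (by rw [Submodule.ker_mkQ, Submodule.range_subtype])
    have hN : EVpos N' C := fun i hi => hs.con1 (hP i hi) (hv (i+1) (by omega) (by omega))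
    exact h1.depth_shift (L1' ht N' hN) (hE.of_equiv (e.trans e'.symm)) (by omega)
  | succ m ih =>
    intro N' P N ι q hs hP hN' hv E he hE hst
    obtain ⟨e⟩ := he
    obtain ⟨e'⟩ := hs.shift (hP (m+1) (by omega)) (hP (m+1+1) (by omega))
    obtain ⟨e2⟩ := hs.range_equiv (hv 1 (by omega) (by omega))
    obtain ⟨a, K, κ, p, hs', hK⟩ := cover N'
    have h1 := ih hs' (EVpos_proj _ _) hK
      (fun i hi hi' => hs.con1 (hP i hi) (hv (i+1) (by omega) (by omega))) E ⟨e.trans e'.symm⟩ hE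
      (by omega)
    have h2 := (hs'.dual_range C).depth_shift (L1' ht _ (EVpos_proj _ _)) h1 (by omega)
    exact h2.of_equiv e2

lemma transpose_ses {P1 P0 M : ModuleCat.{u} R} (d : P1 →ₗ[R] P0) (π : P0 →ₗ[R] M)
    (hπ : Function.Surjective π) (hd : LinearMap.range d = LinearMap.ker π) :
    ∃ (N' N : ModuleCat.{u} R) (ι : N' →ₗ[R] P1) (q : P1 →ₗ[R] N) (j : N →ₗ[R] P0)
      (a : ModuleCat.of R (dl N C ⧸ LinearMap.range (dmap C j)) →ₗ[R]
        ModuleCat.of R (dl P1 C ⧸ LinearMap.range (dmap C d)))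
      (b : ModuleCat.of R (dl P1 C ⧸ LinearMap.range (dmap C d)) →ₗ[R]
        ModuleCat.of R (LinearMap.range (dmap C ι))),
      SES ι q ∧ SES j π ∧ SES a b := by
  have hmem : ∀ x, d x ∈ LinearMap.ker π := fun x => hd ▸ ⟨x, rfl⟩
  let N : ModuleCat.{u} R := ModuleCat.of R (LinearMap.ker π)
  let q : P1 →ₗ[R] N := d.codRestrict (LinearMap.ker π) hmem
  have hq : Function.Surjective q := by
    rintro ⟨y, hy⟩
    rw [← hd] at hy
    obtain ⟨x, rfl⟩ := hy
    exact ⟨x, rfl⟩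
  let j : N →ₗ[R] P0 := (LinearMap.ker π).subtype
  have hsj : SES j π := SES.of_ker π hπ
  have hsq := SES.of_ker q hq
  let ι := (LinearMap.ker q).subtype
  have hdr := hsq.dual_range C
  have hle : LinearMap.range (dmap C j) ≤ (LinearMap.range (dmap C d)).comap (dmap C q) := by
    rintro _ ⟨z, rfl⟩
    exact ⟨z, rfl⟩
  have hle2 : LinearMap.range (dmap C d) ≤ LinearMap.ker
      (dmap (Z := ModuleCat.of R (LinearMap.ker q)) C (LinearMap.ker q).subtype).rangeRestrict := by
    rintro _ ⟨z, rfl⟩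
    exact hdr.apply (z ∘ₗ j)
  refine ⟨_, N, _, q, j, Submodule.mapQ _ _ (dmap C q) hle,
    Submodule.liftQ _ _ hle2, hsq, hsj, ?_, ?_, ?_⟩
  · rw [← LinearMap.ker_eq_bot, LinearMap.ker_eq_bot']
    intro y hy
    obtain ⟨y, rfl⟩ := Submodule.mkQ_surjective _ y
    obtain ⟨z, hz⟩ := (Submodule.Quotient.mk_eq_zero _).1 hy
    refine (Submodule.Quotient.mk_eq_zero _).2 ⟨z, hdr.inj hz⟩
  · intro w
    constructor
    · intro hw
      obtain ⟨w, rfl⟩ := Submodule.mkQ_surjective _ w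
      obtain ⟨y, rfl⟩ := (hdr.exact w).1 hw
      exact ⟨Submodule.Quotient.mk y, rfl⟩
    · rintro ⟨y, rfl⟩
      obtain ⟨y, rfl⟩ := Submodule.mkQ_surjective _ y
      exact hdr.apply y
  · intro l
    obtain ⟨w, rfl⟩ := hdr.surj l
    exact ⟨Submodule.Quotient.mk w, rfl⟩

lemma depth_T [IsNoetherianRing R] [IsLocalRing R] {s t n : ℕ} (ht : dge (kk R) C t)
    {P1 P0 M : ModuleCat.{u} R} (d : P1 →ₗ[R] P0) (π : P0 →ₗ[R] M)
    (hπ : Function.Surjective π) (hd : LinearMap.range d = LinearMap.ker π)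
    [Module.Finite R P1] (h1 : EVpos P1 C) (h0 : EVpos P0 C)
    (hv : ∀ i, 0 < i → i ≠ n + 1 → EV M C i)
    (E : ModuleCat.{u} R) (he : Nonempty (E ≃ₗ[R] Abelian.Ext.{u} M C (n+1))) (hE : depthEq E s)
    (hst : s + (n + 1) ≤ t) :
    depthEq (ModuleCat.of R (dl P1 C ⧸ LinearMap.range (dmap C d))) (s + n) := by
  obtain ⟨e⟩ := he
  obtain ⟨N', N, ι, q, j, a, b, hq, hj, hab⟩ := transpose_ses (C := C) d π hπ hd
  obtain ⟨e1⟩ := hj.ext1_equiv (h0 1 one_pos)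
  have hN' : Module.Finite R N' := Module.Finite.of_injective ι hq.inj
  cases n with
  | zero =>
    have hE1 := hE.of_equiv (B := ModuleCat.of R (dl N C ⧸ LinearMap.range (dmap C j)))
      (e.trans e1.symm)
    have hN : EVpos N C := fun i hi =>
      hj.con1 (h0 i hi) (hv _ (by omega) (by omega))
    obtain ⟨e2⟩ := hq.range_equiv (hN 1 one_pos)
    have hL : dge (kk R) (ModuleCat.of R (LinearMap.range (dmap C ι))) t := fun i hi =>
      (L1' ht N' (hq.EVpos_left h1 hN) i hi).of_equiv_right e2
    refine ⟨fun i hi => hab.cov2 (hE1.1 i hi) (hL i (by omega)), fun hT => hE1.2 ?_⟩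
    cases s with
    | zero => exact hab.cov1_zero hT
    | succ s => exact hab.cov1 hT (hL s (by omega))
  | succ n =>
    obtain ⟨e'⟩ := hj.shift (h0 (n+1) (by omega)) (h0 (n+1+1) (by omega))
    have hL := depth_L ht n hq h1 hN'
      (fun i hi hi' => hj.con1 (h0 i hi) (hv (i+1) (by omega) (by omega))) E
      ⟨e.trans e'.symm⟩ hE (by omega)
    have hsub : Subsingleton (dl N C ⧸ LinearMap.range (dmap C j)) :=
      e1.toEquiv.subsingleton_congr.2 (hv 1 one_pos (by omega))
    have hz : ∀ i, EV (kk R) (ModuleCat.of R (dl N C ⧸ LinearMap.range (dmap C j))) i :=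
      fun i => EV_of_subsingleton hsub i
    exact ⟨fun i hi => hab.cov2 (hz i) (hL.1 i hi), fun hT => hL.2 (hab.cov3 hT (hz _))⟩

lemma sInf_cast_mem {S : Set ℕ} {n : ℕ} (h : sInf ((fun i : ℕ => (i : ℕ∞)) '' S) = n) :
    n ∈ S ∧ ∀ i ∈ S, n ≤ i := by
  have hne : ((fun i : ℕ => (i : ℕ∞)) '' S).Nonempty := by
    by_contra hc
    rw [Set.not_nonempty_iff_eq_empty] at hc
    rw [hc, sInf_empty] at h
    exact ENat.natCast_ne_top n h.symm
  constructor
  · obtain ⟨i, hi, hin⟩ := csInf_mem hne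
    rw [h] at hin
    have hin : (i : ℕ∞) = n := hin
    have : i = n := by exact_mod_cast hin
    exact this ▸ hi
  · intro i hi
    have : (n : ℕ∞) ≤ i := h ▸ sInf_le ⟨i, hi, rfl⟩
    exact_mod_cast this

lemma homothety_equiv (hC : IsSemidualizing R C) : Nonempty (ModuleCat.of R R ≃ₗ[R] dl C C) :=
  ⟨LinearEquiv.ofBijective (LinearMap.toSpanSingleton R (C →ₗ[R] C) LinearMap.id) hC.2.1⟩

lemma main_aux [IsLocalRing R] [IsNoetherianRing R] (hC : IsSemidualizing R C)
    (M : ModuleCat.{u} R)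
    (n : ℕ) (hred : IsReducedGCPerfect R C M) (hdim : gcdim R C M = n)
    (hdual : gcdim R C (ModuleCat.of R (↥M →ₗ[R] ↥C)) ≠ ⊤)
    (T : ModuleCat.{u} R) (hT : IsTransposeC R C M T) :
    rdepth R M + rdepth R T + 1 =
        rdepth R (ModuleCat.of R R) + rdepth R (ExtM R M C n) := by
  have hfin : Module.Finite R C := hC.1
  have hCC : EVpos C C := fun i hi => (EV_iff _ _ _).1 (hC.2.2 i hi)
  obtain ⟨eR⟩ := homothety_equiv hC
  have hMn : gcdimLE R C n M := (sInf_cast_mem hdim).1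
  have hgr := sInf_cast_mem (hred.2.trans hdim)
  obtain ⟨a, ha⟩ := ENat.ne_top_iff_exists.1 hdual
  have hMd : gcdimLE R C a (dl M C) := (sInf_cast_mem ha.symm).1
  have hn0 : 0 < n := hgr.1.1
  have hnM : ¬ EV M C n := fun h => hgr.1.2 ((EV_iff _ _ _).2 h)
  have hlow : ∀ i, 0 < i → i < n → EV M C i := by
    intro i hi hin
    by_contra hc
    have := hgr.2 i ⟨hi, fun h => hc ((EV_iff _ _ _).1 h)⟩
    omega
  rcases depth_cases C with ⟨t, ht⟩ | htop
  · have hnC : Nontrivial C := by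
      by_contra hc
      rw [not_nontrivial_iff_subsingleton] at hc
      have : Subsingleton (C →ₗ[R] C) := inferInstance
      exact not_subsingleton R (eR.toEquiv.subsingleton_congr.2 this)
    have hR : depthEq (ModuleCat.of R R) t := (depthEq_dual ht C hCC hnC).of_equiv eR.symm
    obtain ⟨sM, hsM, hdM⟩ := AB ht n M hMn hnM
    obtain ⟨m, rfl⟩ : ∃ m, n = m + 1 := ⟨n - 1, by omega⟩
    obtain ⟨E, ⟨e⟩, hE1, hE2⟩ := chain_claim m M a 0 hMn hlow hMd (UU_zero M)
    have hnE : Nontrivial E := by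
      by_contra hc
      rw [not_nontrivial_iff_subsingleton] at hc
      exact hnM (e.toEquiv.subsingleton_congr.1 hc)
    obtain ⟨s, hs, hst⟩ := depth_E ht (m+1) _ E hnE hE1 hE2
    obtain ⟨P1, P0, d, π, ⟨hP1, hP0, ⟨hP0p, hπ, -⟩, hrange, hP1p, -⟩, ⟨eT⟩⟩ := hT
    have hT := (depth_T ht.1 d π hπ hrange (EVpos_proj P1 C) (EVpos_proj P0 C)
      (n := m) (fun i hi hi' => by
        rcases Nat.lt_or_ge i (m+1) with h | h
        · exact hlow i hi h
        · exact gcd_EV hMn i (by omega)) E ⟨e⟩ hs hst).of_equiv eT.symm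
    obtain ⟨e3⟩ := extEquiv M C (m+1)
    have hX : depthEq (ExtM R M C (m+1)) s := hs.of_equiv (e.trans e3.symm)
    rw [rdepth_eq hdM, rdepth_eq hT, rdepth_eq hR, rdepth_eq hX]
    have : sM + (s + m) + 1 = t + s := by omega
    exact_mod_cast this
  · have hR : ∀ i, EV (kk R) (ModuleCat.of R R) i := fun i =>
      ((L1' (s := i+1) (fun j _ => htop j) C hCC) i (by omega)).of_equiv_right eR.symm
    rw [rdepth_eq_top (gcd_depth_top htop hMn), rdepth_eq_top hR]
    simp

end transpose

/-- over a Noetherian local ring, if `M` is reduced `G_C`-perfect of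
`G_C`-dimension `n` and `G_C-dim(M^C) < ∞`, then
`depth(M) + depth(Tr_C(M)) = depth(R) + depth(Ext_R^n(M,C)) - 1`
(stated additively in `ℕ∞`). -/
theorem statement4 [IsLocalRing R] [IsNoetherianRing R]
    (C : ModuleCat.{u} R) (hC : IsSemidualizing R C)
    (M : ModuleCat.{u} R) (hMfin : Module.Finite R ↥M)
    (n : ℕ) (hred : IsReducedGCPerfect R C M) (hdim : gcdim R C M = n)
    (hdual : gcdim R C (ModuleCat.of R (↥M →ₗ[R] ↥C)) ≠ ⊤) :
    ∀ T : ModuleCat.{u} R, IsTransposeC R C M T →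
      rdepth R M + rdepth R T + 1 =
        rdepth R (ModuleCat.of R R) + rdepth R (ExtM R M C n) := by
  exact main_aux hC M n hred hdim hdual

end
end

section
/- Let M be a reduced G_C-perfect R-module of G_C-dimension n, and assume Tor_1^R(Tr(M), C) = 0. Then Ext_R^i(λM ⊗_R C, C) ≅ Ext_R^{i+n}(Ext_R^n(M,C), C) for all i > 0. -/
open CategoryTheory TensorProduct

noncomputable section

universe u

variable (R : Type u) [CommRing R]

set_option linter.all false

lemma scHomologyEquiv {S : ShortComplex (ModuleCat.{u} R)} {E : Type u} [AddCommGroup E] [Module R E]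
    (φ : LinearMap.ker S.g.hom →ₗ[R] E) (hs : Function.Surjective φ)
    (hk : ∀ x, φ x = 0 ↔ ∃ y, S.f.hom y = x.1) :
    Nonempty (S.homology ≃ₗ[R] E) := by
  refine ⟨S.moduleCatHomologyIso.toLinearEquiv ≪≫ₗ ?_⟩
  have h : LinearMap.range S.moduleCatToCycles = LinearMap.ker φ := by
    ext x
    rw [LinearMap.mem_ker, hk]
    constructor
    · rintro ⟨y, rfl⟩; exact ⟨y, rfl⟩
    · rintro ⟨y, hy⟩; exact ⟨y, Subtype.ext hy⟩
  exact (Submodule.quotEquivOfEq _ _ h) ≪≫ₗ φ.quotKerEquivOfSurjective hs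

lemma extMk_smul' {M N : ModuleCat.{u} R} (P : ProjectiveResolution M) {n m : ℕ}
    (f : P.complex.X n ⟶ N) (hm : n + 1 = m) (hf : P.complex.d m n ≫ f = 0) (r : R) :
    P.extMk (r • f) m hm (by rw [Linear.comp_smul, hf, smul_zero]) =
      r • (P.extMk f m hm hf : Abelian.Ext.{u} M N n) := by
  rw [Abelian.Ext.smul_eq_comp_mk₀, P.extMk_comp_mk₀]
  simp only [Linear.comp_smul, Category.comp_id]

/-- Comparison with the Ext groups having long exact sequences. -/
lemma extM_equiv (M N : ModuleCat.{u} R) (p : ℕ) :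
    Nonempty (ExtM R M N (p+1) ≃ₗ[R] Abelian.Ext.{u} M N (p+1)) := by
  let P := projectiveResolution M
  let K := P.complex.linearYonedaObj R N
  have e1 : ExtM R M N (p+1) ≅ (K.sc' p (p+1) (p+2)).homology :=
    P.isoExt (p+1) N ≪≫ ShortComplex.homologyMapIso (K.isoSc' p (p+1) (p+2) (by simp) (by simp))
  let φ : LinearMap.ker (K.sc' p (p+1) (p+2)).g.hom →ₗ[R] Abelian.Ext.{u} M N (p+1) :=
    { toFun := fun x => P.extMk (n := p+1) x.1 (p+2) rfl x.2
      map_add' := fun x y => (P.add_extMk _ _ _ _ _ _).symm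
      map_smul' := fun r x => extMk_smul' R P _ _ _ r }
  obtain ⟨e2⟩ := scHomologyEquiv R φ (fun α => by
      obtain ⟨f, hf, h⟩ := P.extMk_surjective α (p+2) rfl
      exact ⟨⟨f, hf⟩, h⟩) (fun x => P.extMk_eq_zero_iff (n := p+1) x.1 (p+2) rfl x.2 p rfl)
  exact ⟨e1.toLinearEquiv ≪≫ₗ e2⟩

lemma extM_congr {A B : ModuleCat.{u} R} (C : ModuleCat.{u} R) (e : A ≃ₗ[R] B) (i : ℕ) :
    Nonempty (ExtM R A C i ≃ₗ[R] ExtM R B C i) :=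
  ⟨((((Ext R (ModuleCat.{u} R) i).mapIso e.toModuleIso.op).app C).symm).toLinearEquiv⟩

lemma subsing_iff (M N : ModuleCat.{u} R) (p : ℕ) :
    Subsingleton (ExtM R M N (p+1)) ↔ Subsingleton (Abelian.Ext.{u} M N (p+1)) := by
  obtain ⟨e⟩ := extM_equiv R M N p
  exact ⟨fun h => e.symm.injective.subsingleton, fun h => e.injective.subsingleton⟩

/-- Vanishing of Ext passes to modules all of whose elements are controlled by `C`. -/
lemma subsing_of_retract {N C D : ModuleCat.{u} R} {ι : Type*} (s : Finset ι)
    (a : ι → N →ₗ[R] C) (b : ι → C →ₗ[R] N)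
    (h : ∀ x, ∑ j ∈ s, b j (a j x) = x) (i : ℕ) (hi : 0 < i) (hC : Subsingleton (ExtM R C D i)) :
    Subsingleton (ExtM R N D i) := by
  obtain ⟨p, rfl⟩ : ∃ p, i = p + 1 := ⟨i - 1, by omega⟩
  rw [subsing_iff] at hC ⊢
  refine subsingleton_of_forall_eq 0 fun x => ?_
  have h1 : 𝟙 N = ∑ j ∈ s, ModuleCat.ofHom (a j) ≫ ModuleCat.ofHom (b j) := by
    ext x
    simp [ModuleCat.hom_sum, h]
  have : x = (Abelian.Ext.mk₀ (𝟙 N)).comp x (zero_add _) := by simp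
  rw [this, h1, ← Abelian.Ext.addEquiv₀_symm_apply, map_sum]
  have h3 : ∀ (t : ι → Abelian.Ext.{u} N N 0), (∑ j ∈ s, t j).comp x (zero_add _) =
      ∑ j ∈ s, (t j).comp x (zero_add _) := fun t =>
    map_sum ((Abelian.Ext.bilinearCompOfLinear R N N D 0 (p+1) (p+1) (zero_add _)).flip x) t s
  rw [h3]
  refine Finset.sum_eq_zero fun j _ => ?_
  rw [Abelian.Ext.addEquiv₀_symm_apply, ← Abelian.Ext.mk₀_comp_mk₀,
    Abelian.Ext.comp_assoc_of_second_deg_zero, Subsingleton.elim ((Abelian.Ext.mk₀ (ModuleCat.ofHom (b j))).comp x _) 0,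
    Abelian.Ext.comp_zero]

lemma ses {A B D : ModuleCat.{u} R} (f : A →ₗ[R] B) (g : B →ₗ[R] D)
    (hf : Function.Injective f) (hg : Function.Surjective g) (hfg : Function.Exact f g) :
    (ShortComplex.mk (ModuleCat.ofHom f) (ModuleCat.ofHom g)
      (by ext x; exact hfg.apply_apply_eq_zero x)).ShortExact :=
  ModuleCat.shortComplex_shortExact _ hfg hf hg

lemma shift_succ {A B D : ModuleCat.{u} R} (C : ModuleCat.{u} R) (f : A →ₗ[R] B) (g : B →ₗ[R] D)
    (hf : Function.Injective f) (hg : Function.Surjective g) (hfg : Function.Exact f g)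
    (hB : ∀ i, 0 < i → Subsingleton (ExtM R B C i)) (i : ℕ) (hi : 0 < i) :
    Nonempty (ExtM R A C i ≃ₗ[R] ExtM R D C (i+1)) := by
  obtain ⟨p, rfl⟩ : ∃ p, i = p + 1 := ⟨i - 1, by omega⟩
  have hS := ses R f g hf hg hfg
  have hB1 := (subsing_iff R B C p).1 (hB _ (by omega))
  have hB2 := (subsing_iff R B C (p+1)).1 (hB _ (by omega))
  obtain ⟨e1⟩ := extM_equiv R A C p
  obtain ⟨e2⟩ := extM_equiv R D C (p+1)
  let δ : Abelian.Ext.{u} A C (p+1) →ₗ[R] Abelian.Ext.{u} D C (p+1+1) :=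
    Abelian.Ext.precompOfLinear hS.extClass R C (by omega)
  have hδ : Function.Bijective δ := by
    constructor
    · rw [injective_iff_map_eq_zero]
      intro x hx
      obtain ⟨y, hy⟩ := Abelian.Ext.contravariant_sequence_exact₁ hS C x (by omega) hx
      rw [← hy, Subsingleton.elim (α := Abelian.Ext.{u} B C (p+1)) y 0, Abelian.Ext.comp_zero]
    · intro x
      exact Abelian.Ext.contravariant_sequence_exact₃ hS C x
        (Subsingleton.elim (α := Abelian.Ext.{u} B C (p+1+1)) _ _) (by omega)
  exact ⟨e1 ≪≫ₗ LinearEquiv.ofBijective δ hδ ≪≫ₗ e2.symm⟩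

lemma shift_one {A B D : ModuleCat.{u} R} (C : ModuleCat.{u} R) (f : A →ₗ[R] B) (g : B →ₗ[R] D)
    (hf : Function.Injective f) (hg : Function.Surjective g) (hfg : Function.Exact f g)
    (hB : Subsingleton (ExtM R B C 1)) :
    Nonempty (((A →ₗ[R] C) ⧸ LinearMap.range (LinearMap.lcomp R C f)) ≃ₗ[R] ExtM R D C 1) := by
  have hS := ses R f g hf hg hfg
  have hB2 := (subsing_iff R B C 0).1 hB
  obtain ⟨e2⟩ := extM_equiv R D C 0
  let δ : (A →ₗ[R] C) →ₗ[R] Abelian.Ext.{u} D C (0+1) :=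
    Abelian.Ext.precompOfLinear hS.extClass R C (by omega) ∘ₗ
      (Abelian.Ext.linearEquiv₀ (R := R)).symm.toLinearMap ∘ₗ
      (ModuleCat.homLinearEquiv (S := R)).symm.toLinearMap
  have hδ : Function.Surjective δ := by
    intro x
    obtain ⟨y, hy⟩ := Abelian.Ext.contravariant_sequence_exact₃ hS C x
        (Subsingleton.elim (α := Abelian.Ext.{u} B C (0+1)) _ _) (n₀ := 0) (by omega)
    refine ⟨(Abelian.Ext.linearEquiv₀ (R := R) y).hom, ?_⟩
    show hS.extClass.comp (Abelian.Ext.mk₀ (Abelian.Ext.linearEquiv₀ (R := R) y)) (by omega) = x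
    rw [Abelian.Ext.mk₀_linearEquiv₀_apply]
    exact hy
  have hk : LinearMap.range (LinearMap.lcomp R C f) = LinearMap.ker δ := by
    ext x
    constructor
    · rintro ⟨y, rfl⟩
      have : (LinearMap.lcomp R C f) y = (ModuleCat.ofHom f ≫ ModuleCat.ofHom y).hom := rfl
      rw [LinearMap.mem_ker]
      show hS.extClass.comp (Abelian.Ext.mk₀ (ModuleCat.ofHom f ≫ ModuleCat.ofHom y)) (by omega) = 0
      rw [← Abelian.Ext.mk₀_comp_mk₀]
      exact hS.extClass_comp_assoc _
    · intro hx
      obtain ⟨y, hy⟩ := Abelian.Ext.contravariant_sequence_exact₁ hS C (n₀ := 0)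
        (Abelian.Ext.mk₀ (ModuleCat.ofHom x)) (by omega) hx
      obtain ⟨z, rfl⟩ := Abelian.Ext.addEquiv₀.symm.surjective y
      refine ⟨z.hom, ?_⟩
      rw [Abelian.Ext.addEquiv₀_symm_apply] at hy
      erw [Abelian.Ext.mk₀_comp_mk₀] at hy
      have := Abelian.Ext.addEquiv₀.symm.injective hy
      exact congrArg ModuleCat.Hom.hom this
  exact ⟨Submodule.quotEquivOfEq _ _ hk ≪≫ₗ δ.quotKerEquivOfSurjective hδ ≪≫ₗ e2.symm⟩

lemma dual_basis (P : Type u) [AddCommGroup P] [Module R P] [Module.Finite R P]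
    [Module.Projective R P] : ∃ (n : ℕ) (e : Fin n → P) (f : Fin n → P →ₗ[R] R),
      ∀ x, ∑ j, f j x • e j = x := by
  obtain ⟨n, F, G, -, -, h⟩ := Module.Finite.exists_comp_eq_id_of_projective R P
  refine ⟨n, fun j => F (Pi.single j 1), fun j => LinearMap.proj j ∘ₗ G, fun x => ?_⟩
  have h1 := LinearMap.congr_fun h x
  simp only [LinearMap.comp_apply, LinearMap.id_apply] at h1
  conv_rhs => rw [← h1, pi_eq_sum_univ' (G x)]
  simp only [map_sum, map_smul, LinearMap.comp_apply, LinearMap.proj_apply]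

section
variable (P C : ModuleCat.{u} R) [Module.Finite R P] [Module.Projective R P]

lemma subsing_tensor {i : ℕ} (hi : 0 < i) (hC : Subsingleton (ExtM R C C i)) :
    Subsingleton (ExtM R (ModuleCat.of R (P ⊗[R] C)) C i) := by
  obtain ⟨n, e, f, h⟩ := dual_basis R P
  refine subsing_of_retract (C := C) R Finset.univ
    (fun j => (TensorProduct.lid R C).toLinearMap ∘ₗ (f j).rTensor C)
    (fun j => TensorProduct.mk R P C (e j)) (fun x => ?_) i hi hC
  change P ⊗[R] C at x
  induction x with
  | zero => simp
  | tmul p c =>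
    simp only [LinearMap.comp_apply, LinearMap.rTensor_tmul, LinearEquiv.coe_coe,
      TensorProduct.lid_tmul, TensorProduct.mk_apply, ← TensorProduct.smul_tmul,
      ← TensorProduct.sum_tmul, h]
  | add x y hx hy =>
    simp only [map_add, Finset.sum_add_distrib] at hx hy ⊢
    rw [hx, hy]

lemma hom_eq {n : ℕ} {e : Fin n → P} {f : Fin n → P →ₗ[R] R}
    (h : ∀ x, ∑ j, f j x • e j = x) (x : P →ₗ[R] C) : ∑ j, (f j).smulRight (x (e j)) = x := by
  ext p
  conv_rhs => rw [← h p]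
  simp

lemma subsing_hom {i : ℕ} (hi : 0 < i) (hC : Subsingleton (ExtM R C C i)) :
    Subsingleton (ExtM R (ModuleCat.of R (P →ₗ[R] C)) C i) := by
  obtain ⟨n, e, f, h⟩ := dual_basis R P
  exact subsing_of_retract (C := C) R Finset.univ
    (fun j => LinearMap.applyₗ (e j))
    (fun j => LinearMap.smulRightₗ (f j)) (fun x => hom_eq R P C h x) i hi hC

lemma dualTensorHom_bij : Function.Bijective (dualTensorHom R P C) := by
  obtain ⟨n, e, f, h⟩ := dual_basis R P
  have hf : ∀ φ : Module.Dual R P, ∑ j, φ (e j) • f j = φ := by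
    intro φ
    ext p
    conv_rhs => rw [← h p]
    simp [mul_comm]
  let s : (P →ₗ[R] C) →ₗ[R] (Module.Dual R P ⊗[R] C) :=
    ∑ j, (TensorProduct.mk R _ C (f j)) ∘ₗ (LinearMap.applyₗ (e j))
  refine Function.bijective_iff_has_inverse.2 ⟨s, fun x => ?_, fun x => ?_⟩
  · induction x with
    | zero => simp
    | tmul p c =>
      simp only [s, LinearMap.sum_apply, LinearMap.comp_apply, LinearMap.applyₗ_apply_apply, dualTensorHom_apply,
        TensorProduct.mk_apply, ← TensorProduct.smul_tmul,
        ← TensorProduct.sum_tmul, hf]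
    | add x y hx hy => rw [map_add, map_add, hx, hy]
  · conv_rhs => rw [← hom_eq R P C h x]
    simp only [s, LinearMap.sum_apply, LinearMap.comp_apply, map_sum]
    rfl

lemma biduality_surj (hC : Function.Bijective (fun r : R => (r • LinearMap.id : C →ₗ[R] C))) :
    Function.Surjective (bidualityMap R C P) := by
  obtain ⟨n, e, f, h⟩ := dual_basis R P
  intro φ
  choose r hr using fun j => hC.2 (φ ∘ₗ LinearMap.smulRightₗ (f j))
  refine ⟨∑ j, r j • e j, ?_⟩
  ext ψ
  have h1 : ∀ j c, r j • c = φ ((f j).smulRight c) := fun j c => LinearMap.congr_fun (hr j) c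
  conv_rhs => rw [← hom_eq R P C h ψ]
  simp only [map_sum, ← h1]
  simp [bidualityMap]
end

lemma tor_inj {Q2 Q1 Q0 C L P T : Type u} [AddCommGroup Q2] [Module R Q2] [AddCommGroup Q1]
    [Module R Q1] [AddCommGroup Q0] [Module R Q0] [AddCommGroup C] [Module R C]
    [AddCommGroup L] [Module R L] [AddCommGroup P] [Module R P] [AddCommGroup T] [Module R T]
    (d2 : Q2 →ₗ[R] Q1) (d1 : Q1 →ₗ[R] Q0) (ε : Q0 →ₗ[R] C) (hε : Function.Surjective ε)
    (h1 : Function.Exact d1 ε) (h2 : d1 ∘ₗ d2 = 0) [Module.Flat R Q0]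
    (hT : Function.Exact (d2.lTensor T) (d1.lTensor T))
    (ι : L →ₗ[R] P) (π : P →ₗ[R] T) (hι : Function.Injective ι) (hπ : Function.Surjective π)
    (hιπ : Function.Exact ι π) : Function.Injective (ι.rTensor C) := by
  rw [injective_iff_map_eq_zero]
  intro x hx
  have comm : ∀ {A B A' B' : Type u} [AddCommGroup A] [Module R A] [AddCommGroup B] [Module R B]
      [AddCommGroup A'] [Module R A'] [AddCommGroup B'] [Module R B']
      (f : A →ₗ[R] B) (g : A' →ₗ[R] B') (z : A ⊗[R] A'),
      f.rTensor B' (g.lTensor A z) = g.lTensor B (f.rTensor A' z) := by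
    intro A B A' B' _ _ _ _ _ _ _ _ f g z
    rw [← LinearMap.comp_apply, ← LinearMap.comp_apply, LinearMap.rTensor_comp_lTensor,
      LinearMap.lTensor_comp_rTensor]
  obtain ⟨y, rfl⟩ := LinearMap.lTensor_surjective L hε x
  rw [comm] at hx
  obtain ⟨z, hz⟩ := (lTensor_exact P h1 hε _).1 hx
  have hz' : d1.lTensor T (π.rTensor Q1 z) = 0 := by
    rw [← comm, hz]
    exact (rTensor_exact Q0 hιπ hπ _).2 ⟨y, rfl⟩
  obtain ⟨w', hw'⟩ := (hT _).1 hz'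
  obtain ⟨w, rfl⟩ := LinearMap.rTensor_surjective Q2 hπ w'
  have h3 : π.rTensor Q1 (z - d2.lTensor P w) = 0 := by
    rw [map_sub, comm, hw', sub_self]
  obtain ⟨v, hv⟩ := (rTensor_exact Q1 hιπ hπ _).1 h3
  have h4 : ι.rTensor Q0 (d1.lTensor L v) = ι.rTensor Q0 y := by
    rw [comm, hv, map_sub, hz, ← LinearMap.comp_apply (LinearMap.lTensor P d1),
      ← LinearMap.lTensor_comp, h2]
    simp
  have h5 := Module.Flat.rTensor_preserves_injective_linearMap ι hι h4
  rw [← h5]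
  exact (lTensor_exact L h1 hε _).2 ⟨v, rfl⟩

lemma tor_inj' (T C : ModuleCat.{u} R) (h : Subsingleton (TorM R T C 1)) {L P : Type u}
    [AddCommGroup L] [Module R L] [AddCommGroup P] [Module R P]
    (ι : L →ₗ[R] P) (π : P →ₗ[R] T) (hι : Function.Injective ι) (hπ : Function.Surjective π)
    (hιπ : Function.Exact ι π) : Function.Injective (ι.rTensor C) := by
  let Q := projectiveResolution C
  let F := (MonoidalCategory.tensoringLeft (ModuleCat.{u} R)).obj T
  have hz : Limits.IsZero (((F.mapHomologicalComplex _).obj Q.complex).homology 1) :=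
    (ModuleCat.isZero_of_subsingleton (TorM R T C 1)).of_iso (Q.isoLeftDerivedObj F 1).symm
  rw [← HomologicalComplex.exactAt_iff_isZero_homology,
    HomologicalComplex.exactAt_iff' _ 2 1 0 (by simp) (by simp)] at hz
  have hT : Function.Exact ((Q.complex.d 2 1).hom.lTensor T) ((Q.complex.d 1 0).hom.lTensor T) :=
    (ShortComplex.ShortExact.moduleCat_exact_iff_function_exact _).1 hz
  have hpi : Function.Surjective (Q.π.f 0).hom := (ModuleCat.epi_iff_surjective _).1 inferInstance
  have hex : Function.Exact (Q.complex.d 1 0).hom (Q.π.f 0).hom :=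
    (ShortComplex.ShortExact.moduleCat_exact_iff_function_exact _).1 Q.exact₀
  have : Module.Projective R (Q.complex.X 0) := (IsProjective.iff_projective _).2 (Q.projective 0)
  exact tor_inj R _ _ _ hpi hex (by
    rw [← ModuleCat.hom_comp, Q.complex.d_comp_d]; rfl) hT ι π hι hπ hιπ

lemma exact_quot {Z A B E : ModuleCat.{u} R} (s : Z →ₗ[R] A) (w : A →ₗ[R] B) (v : B →ₗ[R] E)
    (h1 : Function.Exact s w) (h2 : Function.Exact w v) :
    ∃ w' : (A ⧸ LinearMap.range s) →ₗ[R] B, Function.Injective w' ∧ Function.Exact w' v := by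
  have hk := LinearMap.exact_iff.1 h1
  refine ⟨(LinearMap.range s).liftQ w hk.ge, ?_, ?_⟩
  · rw [← LinearMap.ker_eq_bot, Submodule.ker_liftQ_eq_bot']
    exact hk.symm
  · rw [LinearMap.exact_iff, Submodule.range_liftQ, ← LinearMap.exact_iff]
    exact h2

/-- The left exactness of `Hom(-,C)`. -/
lemma lcomp_exact {K X M : ModuleCat.{u} R} (C : ModuleCat.{u} R) (f : K →ₗ[R] X) (g : X →ₗ[R] M)
    (hg : Function.Surjective g) (hfg : Function.Exact f g) :
    Function.Exact (LinearMap.lcomp R C g) (LinearMap.lcomp R C f) :=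
  LinearMap.exact_lcomp_of_exact_of_surjective C hfg hg

def Good (C X : ModuleCat.{u} R) : Prop :=
  Function.Surjective (bidualityMap R C X) ∧
    ∀ i : ℕ, 0 < i → Subsingleton (ExtM R (ModuleCat.of R (X →ₗ[R] C)) C i)

/-- `X^C / M^C`. -/
def LL (C : ModuleCat.{u} R) {X M : ModuleCat.{u} R} (g : X →ₗ[R] M) : ModuleCat.{u} R :=
  ModuleCat.of R ((X →ₗ[R] C) ⧸ LinearMap.range (LinearMap.lcomp R C g))

lemma lcomp_inj (C : ModuleCat.{u} R) {X M : ModuleCat.{u} R} {g : X →ₗ[R] M}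
    (hg : Function.Surjective g) : Function.Injective (LinearMap.lcomp R C g) :=
  LinearMap.lcomp_injective_of_surjective g hg

lemma LL_succ (C : ModuleCat.{u} R) {X M : ModuleCat.{u} R} {g : X →ₗ[R] M}
    (hg : Function.Surjective g) (hX : Good R C X) (i : ℕ) (hi : 0 < i) :
    Nonempty (ExtM R (ModuleCat.of R (M →ₗ[R] C)) C i ≃ₗ[R] ExtM R (LL R C g) C (i+1)) :=
  shift_succ R (A := ModuleCat.of R (M →ₗ[R] C)) (B := ModuleCat.of R (X →ₗ[R] C)) C
    (LinearMap.lcomp R C g) (Submodule.mkQ _) (lcomp_inj R C hg) (Submodule.mkQ_surjective _)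
    (LinearMap.exact_map_mkQ_range _) hX.2 i hi

lemma LL_one (C : ModuleCat.{u} R) {X M : ModuleCat.{u} R} {g : X →ₗ[R] M}
    (hg : Function.Surjective g) (hX : Good R C X) :
    Nonempty ((((M →ₗ[R] C) →ₗ[R] C) ⧸ LinearMap.range (bidualityMap R C M)) ≃ₗ[R]
      ExtM R (LL R C g) C 1) := by
  obtain ⟨e⟩ := shift_one R (A := ModuleCat.of R (M →ₗ[R] C)) (B := ModuleCat.of R (X →ₗ[R] C))
    (D := LL R C g) C
    (LinearMap.lcomp R C g) (Submodule.mkQ _) (lcomp_inj R C hg) (Submodule.mkQ_surjective _)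
    (LinearMap.exact_map_mkQ_range _) (hX.2 1 one_pos)
  have hr : LinearMap.range (bidualityMap R C M) =
      LinearMap.range (LinearMap.lcomp R C (LinearMap.lcomp R C g)) := by
    have hc : LinearMap.lcomp R C (LinearMap.lcomp R C g) ∘ₗ bidualityMap R C X =
      bidualityMap R C M ∘ₗ g := rfl
    rw [← LinearMap.range_comp_of_range_eq_top (bidualityMap R C M) (LinearMap.range_eq_top.2 hg),
      ← hc, LinearMap.range_comp_of_range_eq_top _ (LinearMap.range_eq_top.2 hX.1)]
  exact ⟨Submodule.quotEquivOfEq _ _ hr ≪≫ₗ e⟩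

lemma LL_compare (C : ModuleCat.{u} R) {X Y M : ModuleCat.{u} R} {g : X →ₗ[R] M} {h : Y →ₗ[R] M}
    (hg : Function.Surjective g) (hX : Good R C X) (hh : Function.Surjective h) (hY : Good R C Y)
    (i : ℕ) (hi : 0 < i) :
    Nonempty (ExtM R (LL R C g) C i ≃ₗ[R] ExtM R (LL R C h) C i) := by
  obtain ⟨p, rfl⟩ : ∃ p, i = p + 1 := ⟨i - 1, by omega⟩
  rcases Nat.eq_zero_or_pos p with rfl | hp
  · obtain ⟨e⟩ := LL_one R C hg hX
    obtain ⟨e'⟩ := LL_one R C hh hY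
    exact ⟨e.symm ≪≫ₗ e'⟩
  · obtain ⟨e⟩ := LL_succ R C hg hX p hp
    obtain ⟨e'⟩ := LL_succ R C hh hY p hp
    exact ⟨e.symm ≪≫ₗ e'⟩

lemma good_of_tot {C X : ModuleCat.{u} R} (h : IsTotallyCReflexive R C X) : Good R C X :=
  ⟨h.2.1.2, h.2.2.2⟩

lemma main_ind (C : ModuleCat.{u} R) (n : ℕ) : ∀ M : ModuleCat.{u} R, gcdimLE R C (n+1) M →
    (∀ j, 0 < j → j < n + 1 → Subsingleton (ExtM R M C j)) →
    ∀ (X : ModuleCat.{u} R) (g : X →ₗ[R] M), Function.Surjective g → Good R C X →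
    ∀ i, 0 < i → Nonempty (ExtM R (LL R C g) C i ≃ₗ[R] ExtM R (ExtM R M C (n+1)) C (i+(n+1))) := by
  induction n with
  | zero =>
    rintro M ⟨X0, K, f0, g0, hf0, hg0, hfg, hX0, hK⟩ - X g hg hX i hi
    obtain ⟨e⟩ := LL_compare R C hg hX hg0 (good_of_tot R hX0) i hi
    have hfg' : Function.Exact f0 g0 := LinearMap.exact_iff.2 hfg
    obtain ⟨e1⟩ := shift_one R C f0 g0 hf0 hg0 hfg' (hX0.2.2.1 1 one_pos)
    let v : (K →ₗ[R] C) →ₗ[R] ExtM R M C (0+1) := e1.toLinearMap ∘ₗ Submodule.mkQ _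
    have hv : Function.Exact (LinearMap.lcomp R C f0) v := by
      rw [LinearMap.exact_iff, LinearEquiv.ker_comp, Submodule.ker_mkQ]
    obtain ⟨w, hw1, hw2⟩ := exact_quot R (Z := ModuleCat.of R (M →ₗ[R] C))
      (A := ModuleCat.of R (X0 →ₗ[R] C)) (B := ModuleCat.of R (K →ₗ[R] C))
      (LinearMap.lcomp R C g0) (LinearMap.lcomp R C f0) v
      (lcomp_exact R C f0 g0 hg0 hfg') hv
    obtain ⟨e2⟩ := shift_succ R (A := LL R C g0) (B := ModuleCat.of R (K →ₗ[R] C)) C w v hw1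
      (e1.surjective.comp (Submodule.mkQ_surjective _)) hw2 (hK.2.2.2) i hi
    exact ⟨e ≪≫ₗ e2⟩
  | succ n ih =>
    rintro M ⟨X0, K, f0, g0, hf0, hg0, hfg, hX0, hK⟩ hM X g hg hX i hi
    obtain ⟨e⟩ := LL_compare R C hg hX hg0 (good_of_tot R hX0) i hi
    have hfg' : Function.Exact f0 g0 := LinearMap.exact_iff.2 hfg
    obtain ⟨e1⟩ := shift_one R C f0 g0 hf0 hg0 hfg' (hX0.2.2.1 1 one_pos)
    have h1 := hM 1 one_pos (by omega)
    have h2 : LinearMap.range (LinearMap.lcomp R C f0) = ⊤ :=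
      Submodule.Quotient.subsingleton_iff.1 e1.injective.subsingleton |>.symm ▸ rfl
    have hk := LinearMap.exact_iff.1 (lcomp_exact R C f0 g0 hg0 hfg')
    obtain ⟨e2⟩ := extM_congr R (A := LL R C g0) (B := ModuleCat.of R (K →ₗ[R] C)) C
      (Submodule.quotEquivOfEq _ _ hk.symm ≪≫ₗ
        (LinearMap.lcomp R C f0).quotKerEquivOfSurjective (LinearMap.range_eq_top.1 h2)) i
    obtain ⟨X1, K1, f1, g1, hf1, hg1, hfg1, hX1, hK1⟩ := id hK
    obtain ⟨e3⟩ := LL_succ R C hg1 (good_of_tot R hX1) i hi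
    have hs := shift_succ R C f0 g0 hf0 hg0 hfg' hX0.2.2.1
    obtain ⟨e4⟩ := ih K hK (fun j hj hj' => by
      obtain ⟨e⟩ := hs j hj
      have := hM (j+1) (by omega) (by omega)
      exact e.injective.subsingleton) X1 g1 hg1 (good_of_tot R hX1) (i+1) (by omega)
    obtain ⟨e5⟩ := hs (n+1) (by omega)
    obtain ⟨e6⟩ := extM_congr R C e5 (i+1+(n+1))
    have : i + (n+1+1) = i + 1 + (n+1) := by omega
    rw [this]
    exact ⟨e ≪≫ₗ e2 ≪≫ₗ e3 ≪≫ₗ e4 ≪≫ₗ e6⟩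

lemma lambda_part (C : ModuleCat.{u} R) (hC : IsSemidualizing R C) (M : ModuleCat.{u} R)
    (htor : ∀ T : ModuleCat.{u} R, IsTranspose R M T → Subsingleton (TorM R T C 1))
    (L : ModuleCat.{u} R) (hL : IsLambda R M L) :
    ∃ (X : ModuleCat.{u} R) (g : X →ₗ[R] M), Function.Surjective g ∧ Good R C X ∧
      ∀ i, 0 < i → Nonempty (ExtM R (ModuleCat.of R (L ⊗[R] C)) C i ≃ₗ[R]
        ExtM R (LL R C g) C i) := by
  obtain ⟨T, hT, P, q, hPf, ⟨hPp, hq, -⟩, ⟨eL⟩⟩ := hL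
  have ht := htor T hT
  obtain ⟨P1, P0, d, π, ⟨h1f, h0f, ⟨h0p, hπ, -⟩, hd, h1p, -⟩, ⟨eT⟩⟩ := hT
  change T ≃ₗ[R] ((P1 →ₗ[R] R) ⧸ LinearMap.range (LinearMap.lcomp R R d)) at eT
  refine ⟨P0, π, hπ, ⟨biduality_surj R P0 C hC.2.1,
    fun i hi => subsing_hom R P0 C hi (hC.2.2 i hi)⟩, fun i hi => ?_⟩
  have hdπ : Function.Exact d π := LinearMap.exact_iff.2 hd.symm
  -- the first exact sequence
  let ι : L →ₗ[R] P := (LinearMap.ker q).subtype ∘ₗ eL.toLinearMap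
  have hι : Function.Injective ι := Subtype.val_injective.comp eL.injective
  have hιq : Function.Exact ι q := by
    rw [LinearMap.exact_iff, LinearEquiv.range_comp, Submodule.range_subtype]
  obtain ⟨e1⟩ := shift_succ R (A := ModuleCat.of R (L ⊗[R] C)) (B := ModuleCat.of R (P ⊗[R] C))
    (D := ModuleCat.of R (T ⊗[R] C)) C (ι.rTensor C) (q.rTensor C)
    (tor_inj' R T C ht ι q hι hq hιq) (LinearMap.rTensor_surjective C hq)
    (rTensor_exact C hιq hq) (fun i hi => subsing_tensor R P C hi (hC.2.2 i hi)) i hi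
  -- the second exact sequence
  let r : (P1 →ₗ[R] R) →ₗ[R] T := eT.symm.toLinearMap ∘ₗ Submodule.mkQ _
  have hr : Function.Surjective r := eT.symm.surjective.comp (Submodule.mkQ_surjective _)
  have hdr : Function.Exact (LinearMap.lcomp R R d) r := by
    rw [LinearMap.exact_iff, LinearEquiv.ker_comp, Submodule.ker_mkQ]
  let E0 := LinearEquiv.ofBijective _ (dualTensorHom_bij R P0 C)
  let E1 := LinearEquiv.ofBijective _ (dualTensorHom_bij R P1 C)
  let v : (P1 →ₗ[R] C) →ₗ[R] T ⊗[R] C := r.rTensor C ∘ₗ E1.symm.toLinearMap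
  have hv : Function.Surjective v := (LinearMap.rTensor_surjective C hr).comp E1.symm.surjective
  have hcomm : LinearMap.lcomp R C d ∘ₗ E0.toLinearMap =
      E1.toLinearMap ∘ₗ (LinearMap.lcomp R R d).rTensor C := by
    apply TensorProduct.ext'
    intro x y
    rfl
  have hdv : Function.Exact (LinearMap.lcomp R C d) v := by
    intro x
    obtain ⟨y, rfl⟩ := E1.surjective x
    have : v (E1 y) = r.rTensor C y := by simp [v]
    rw [this, rTensor_exact C hdr hr y]
    constructor
    · rintro ⟨z, rfl⟩
      exact ⟨E0 z, LinearMap.congr_fun hcomm z⟩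
    · rintro ⟨z, hz⟩
      obtain ⟨z, rfl⟩ := E0.surjective z
      exact ⟨z, E1.injective ((LinearMap.congr_fun hcomm z).symm.trans hz)⟩
  obtain ⟨w, hw1, hw2⟩ := exact_quot R (Z := ModuleCat.of R (M →ₗ[R] C))
      (A := ModuleCat.of R (P0 →ₗ[R] C)) (B := ModuleCat.of R (P1 →ₗ[R] C))
      (E := ModuleCat.of R (T ⊗[R] C))
      (LinearMap.lcomp R C π) (LinearMap.lcomp R C d) v
      (lcomp_exact R C d π hπ hdπ) hdv
  obtain ⟨e2⟩ := shift_succ R (A := LL R C π) (B := ModuleCat.of R (P1 →ₗ[R] C))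
    (D := ModuleCat.of R (T ⊗[R] C)) C w v hw1 hv hw2
    (fun i hi => subsing_hom R P1 C hi (hC.2.2 i hi)) i hi
  exact ⟨e1 ≪≫ₗ e2.symm⟩

/-- if `M` is reduced `G_C`-perfect of `G_C`-dimension `n` and
`Tor_1^R(Tr(M), C) = 0`, then
`Ext_R^i(λM ⊗ C, C) ≅ Ext_R^{i+n}(Ext_R^n(M,C), C)` for all `i > 0`. -/
theorem statement5 [IsNoetherianRing R] (hsp : IsSemiperfectRing R)
    (C : ModuleCat.{u} R) (hC : IsSemidualizing R C)
    (M : ModuleCat.{u} R) (hMfin : Module.Finite R ↥M)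
    (n : ℕ) (hred : IsReducedGCPerfect R C M) (hdim : gcdim R C M = n)
    (htor : ∀ T : ModuleCat.{u} R, IsTranspose R M T →
      Subsingleton (TorM R T C 1)) :
    ∀ L : ModuleCat.{u} R, IsLambda R M L →
      ∀ i : ℕ, 0 < i →
        Nonempty (↥(ExtM R (ModuleCat.of R (↥L ⊗[R] ↥C)) C i) ≃ₗ[R]
          ↥(ExtM R (ExtM R M C n) C (i + n))) := by
  intro L hL i hi
  obtain ⟨X, g, hg, hX, hE⟩ := lambda_part R C hC M htor L hL
  have hgc : gcdimLE R C n M := by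
    have hne : ((fun n : ℕ => (n : ℕ∞)) '' {n | gcdimLE R C n M}).Nonempty := by
      by_contra h
      rw [Set.not_nonempty_iff_eq_empty] at h
      apply hred.1
      rw [gcdim, h, sInf_empty]
    obtain ⟨m, hm, hmn⟩ := csInf_mem hne
    have : m = n := by
      have h3 : (m : ℕ∞) = n := hmn.trans hdim
      exact_mod_cast h3
    exact this ▸ hm
  have hr : rgrade R C M = n := hred.2.trans hdim
  have hvan : ∀ j, 0 < j → j < n → Subsingleton (ExtM R M C j) := by
    intro j hj hjn
    by_contra h
    have h1 : rgrade R C M ≤ (j : ℕ∞) := sInf_le ⟨j, ⟨hj, h⟩, rfl⟩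
    rw [hr] at h1
    have : n ≤ j := by exact_mod_cast h1
    omega
  have hn : 0 < n := by
    have h1 : (1 : ℕ∞) ≤ rgrade R C M := by
      refine le_sInf ?_
      rintro _ ⟨j, ⟨hj, -⟩, rfl⟩
      show (1 : ℕ∞) ≤ (j : ℕ∞)
      exact_mod_cast hj
    rw [hr] at h1
    exact_mod_cast h1
  obtain ⟨m, rfl⟩ : ∃ m, n = m + 1 := ⟨n - 1, by omega⟩
  obtain ⟨e1⟩ := hE i hi
  obtain ⟨e2⟩ := main_ind R C m M hgc hvan X g hg hX i hi
  exact ⟨e1 ≪≫ₗ e2⟩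

end
end
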